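/- arXiv:2311.03241 — 6 statements merged into one kernel-verified Lean document; each statement's English description precedes it below -/
import Mathlib

section
/- The function v_b is continuously differentiable on [0,∞) with v_b'(0) = 0; it satisfies ℒv_b(x) = −r·v_b(x) + μ·v_b'(x) + (σ²/2)·v_b''(x) = 0 for every x ∈ (0, b), and v_b'(x) = η(x) for every x ∈ (b, ∞). -/
/-!
Below the barrier `v_b` is the multiple of `φ` whose slope at `b` is `η b`, and above it `v_b` is a
primitive of `η`. The two one-sided derivatives therefore agree at `b`, so `v_b` is `C¹`. Being a
multiple of `φ` near every point of `[0, b)`, it inherits from `φ` the vanishing slope at `0` and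
the equation `ℒv = 0`; the latter holds for `φ` because `γ₊` and `γ₋` are the roots of
`(σ² / 2) γ² + μ γ - r`.
-/

open Set Filter
open scoped Topology

section Gluing

variable {𝕜 E : Type*} [NontriviallyNormedField 𝕜] [NormedAddCommGroup E] [NormedSpace 𝕜 E]
  {v v' : 𝕜 → E} {s t : Set 𝕜}

theorem hasDerivWithinAt_union_of_isClosed (hs : IsClosed s) (ht : IsClosed t)
    (hvs : ∀ x ∈ s, HasDerivWithinAt v (v' x) s x) (hvt : ∀ x ∈ t, HasDerivWithinAt v (v' x) t x)
    (x : 𝕜) : HasDerivWithinAt v (v' x) (s ∪ t) x := by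
  have extend {u : Set 𝕜} (hu : IsClosed u) (hvu : ∀ x ∈ u, HasDerivWithinAt v (v' x) u x) :
      HasDerivWithinAt v (v' x) u x := by
    by_cases hx : x ∈ u
    · exact hvu x hx
    · exact HasFDerivWithinAt.of_notMem_closure (by rwa [hu.closure_eq])
  exact (extend hs hvs).union (extend ht hvt)

theorem contDiffOn_one_of_hasDerivWithinAt (hs : UniqueDiffOn 𝕜 s)
    (hv : ∀ x ∈ s, HasDerivWithinAt v (v' x) s x) (hv' : ContinuousOn v' s) :
    ContDiffOn 𝕜 1 v s :=
  (contDiffOn_one_iff_derivWithin hs).2 ⟨fun x hx ↦ (hv x hx).differentiableWithinAt,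
    hv'.congr fun x hx ↦ (hv x hx).derivWithin (hs x hx)⟩

end Gluing

theorem hasDerivWithinAt_integral_Ici {E : Type*} [NormedAddCommGroup E] [NormedSpace ℝ E]
    [CompleteSpace E] {f : ℝ → E} {a x : ℝ} (hf : ContinuousOn f (Ici a)) (hx : x ∈ Ici a) :
    HasDerivWithinAt (fun y ↦ ∫ u in a..y, f u) (f x) (Ici a) x := by
  have hx' : x ∈ Icc a (x + 1) := ⟨hx, by linarith⟩
  have hfIcc : ContinuousOn f (Icc a (x + 1)) := hf.mono Icc_subset_Ici_self
  have hint : IntervalIntegrable f MeasureTheory.volume a x :=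
    (hf.mono Icc_subset_Ici_self).intervalIntegrable_of_Icc hx
  -- The one-sided fundamental theorem of calculus finds `x ∈ Icc a (x + 1)` by instance search.
  have : Fact (x ∈ Icc a (x + 1)) := ⟨hx'⟩
  have hderiv : HasDerivWithinAt (fun y ↦ ∫ u in a..y, f u) (f x) (Icc a (x + 1)) x :=
    intervalIntegral.integral_hasDerivWithinAt_right hint
      (hfIcc.stronglyMeasurableAtFilter_nhdsWithin measurableSet_Icc x) (hfIcc x hx')
  refine hderiv.mono_of_mem_nhdsWithin ?_
  rw [← Ici_inter_Iic]
  exact inter_mem_nhdsWithin _ (Iic_mem_nhds (by linarith))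

/-- The operator `ℒ` of the text: the generator of a Brownian motion with drift `μ` and volatility
`σ`, killed at rate `r`. -/
noncomputable def killedGenerator (μ σ r : ℝ) (v : ℝ → ℝ) (x : ℝ) : ℝ :=
  -r * v x + μ * deriv v x + σ ^ 2 / 2 * deriv (deriv v) x

section KilledGenerator

variable {μ σ r : ℝ}

theorem killedGenerator_congr {v w : ℝ → ℝ} {x : ℝ} (h : v =ᶠ[𝓝 x] w) :
    killedGenerator μ σ r v x = killedGenerator μ σ r w x := by
  rw [killedGenerator, killedGenerator, h.eq_of_nhds, h.deriv_eq, h.deriv.deriv_eq]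

theorem killedGenerator_const_mul (c : ℝ) (v : ℝ → ℝ) (x : ℝ) :
    killedGenerator μ σ r (fun y ↦ c * v y) x = c * killedGenerator μ σ r v x := by
  simp only [killedGenerator, deriv_const_mul_field']
  ring

theorem characteristic_eq_zero_iff (hσ : σ ≠ 0) (hdisc : 0 ≤ μ ^ 2 + 2 * r * σ ^ 2) (γ : ℝ) :
    σ ^ 2 / 2 * γ ^ 2 + μ * γ - r = 0 ↔
      γ = (-μ + √(μ ^ 2 + 2 * r * σ ^ 2)) / σ ^ 2 ∨
        γ = (-μ - √(μ ^ 2 + 2 * r * σ ^ 2)) / σ ^ 2 := by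
  have hdiscrim : discrim (σ ^ 2 / 2) μ (-r) =
      √(μ ^ 2 + 2 * r * σ ^ 2) * √(μ ^ 2 + 2 * r * σ ^ 2) := by
    rw [Real.mul_self_sqrt hdisc, discrim]
    ring
  have hroots := quadratic_eq_zero_iff (by positivity) hdiscrim γ
  rwa [mul_div_cancel₀ _ two_ne_zero, ← sq, ← sub_eq_add_neg] at hroots

end KilledGenerator

/-- The function `φ` of the text, with exponents `γp` for `γ₊` and `γm` for `γ₋`: the combination of
the exponential solutions of `ℒv = 0` whose slope vanishes at `0`. -/
noncomputable def reflectedSolution (γp γm x : ℝ) : ℝ :=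
  Real.exp (γp * x) / γp - Real.exp (γm * x) / γm

section ReflectedSolution

variable {γp γm : ℝ}

theorem hasDerivAt_exp_const_mul (γ x : ℝ) :
    HasDerivAt (fun y ↦ Real.exp (γ * y)) (γ * Real.exp (γ * x)) x := by
  simpa only [mul_comm, id, mul_one] using ((hasDerivAt_id x).const_mul γ).exp

theorem hasDerivAt_reflectedSolution (hp : γp ≠ 0) (hm : γm ≠ 0) (x : ℝ) :
    HasDerivAt (reflectedSolution γp γm) (Real.exp (γp * x) - Real.exp (γm * x)) x := by
  have h := ((hasDerivAt_exp_const_mul γp x).div_const γp).sub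
    ((hasDerivAt_exp_const_mul γm x).div_const γm)
  rwa [mul_div_cancel_left₀ _ hp, mul_div_cancel_left₀ _ hm] at h

theorem deriv_reflectedSolution (hp : γp ≠ 0) (hm : γm ≠ 0) :
    deriv (reflectedSolution γp γm) = fun x ↦ Real.exp (γp * x) - Real.exp (γm * x) :=
  funext fun x ↦ (hasDerivAt_reflectedSolution hp hm x).deriv

theorem contDiff_reflectedSolution {n : WithTop ℕ∞} :
    ContDiff ℝ n (reflectedSolution γp γm) := by
  unfold reflectedSolution
  fun_prop

theorem deriv_reflectedSolution_zero (hp : γp ≠ 0) (hm : γm ≠ 0) :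
    deriv (reflectedSolution γp γm) 0 = 0 := by
  simp [deriv_reflectedSolution hp hm]

theorem deriv_reflectedSolution_ne_zero (hp : γp ≠ 0) (hm : γm ≠ 0) (hne : γp ≠ γm) {x : ℝ}
    (hx : x ≠ 0) : deriv (reflectedSolution γp γm) x ≠ 0 := by
  rw [deriv_reflectedSolution hp hm, sub_ne_zero, Real.exp_injective.ne_iff]
  exact (mul_left_injective₀ hx).ne hne

theorem killedGenerator_reflectedSolution {μ σ r : ℝ} (hp : γp ≠ 0) (hm : γm ≠ 0)
    (hrootp : σ ^ 2 / 2 * γp ^ 2 + μ * γp - r = 0)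
    (hrootm : σ ^ 2 / 2 * γm ^ 2 + μ * γm - r = 0) (x : ℝ) :
    killedGenerator μ σ r (reflectedSolution γp γm) x = 0 := by
  have hderiv₂ : deriv (deriv (reflectedSolution γp γm)) x =
      γp * Real.exp (γp * x) - γm * Real.exp (γm * x) := by
    rw [deriv_reflectedSolution hp hm]
    exact ((hasDerivAt_exp_const_mul γp x).sub (hasDerivAt_exp_const_mul γm x)).deriv
  rw [killedGenerator, hderiv₂, deriv_reflectedSolution hp hm, reflectedSolution]
  have hdivp : r / γp = σ ^ 2 / 2 * γp + μ := by rw [div_eq_iff hp]; linear_combination -hrootp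
  have hdivm : r / γm = σ ^ 2 / 2 * γm + μ := by rw [div_eq_iff hm]; linear_combination -hrootm
  linear_combination -Real.exp (γp * x) * hdivp + Real.exp (γm * x) * hdivm

end ReflectedSolution

/-- `v` is the value `v_b` of the barrier policy at level `b`, built from `φ` and the marginal
reward `η`. It is a predicate because `v_b` is determined on `[0, ∞)` only. -/
structure IsBarrierValue (φ η : ℝ → ℝ) (b : ℝ) (v : ℝ → ℝ) : Prop where
  eq_below : ∀ x ∈ Icc 0 b, v x = η b / deriv φ b * φ x
  eq_above : ∀ x ∈ Ici b, v x = η b * φ b / deriv φ b + ∫ u in b..x, η u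

/-- The derivative of the value `v_b`. At `b` both formulas give `η b` when `deriv φ b ≠ 0`. -/
noncomputable def barrierSlope (φ η : ℝ → ℝ) (b x : ℝ) : ℝ :=
  if x ≤ b then η b / deriv φ b * deriv φ x else η x

section BarrierSlope

variable {φ η : ℝ → ℝ} {b x : ℝ}

theorem barrierSlope_of_le (hx : x ≤ b) :
    barrierSlope φ η b x = η b / deriv φ b * deriv φ x :=
  if_pos hx

theorem barrierSlope_of_ge (hφb : deriv φ b ≠ 0) (hx : b ≤ x) : barrierSlope φ η b x = η x := by
  obtain rfl | hlt := hx.eq_or_lt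
  · rw [barrierSlope_of_le le_rfl, div_mul_cancel₀ _ hφb]
  · exact if_neg hlt.not_ge

theorem continuous_barrierSlope (hφ : Continuous (deriv φ)) (hφb : deriv φ b ≠ 0)
    (hη : ContinuousOn η (Ici b)) : Continuous (barrierSlope φ η b) := by
  have hbelow : ContinuousOn (barrierSlope φ η b) (Iic b) :=
    (hφ.const_mul (η b / deriv φ b)).continuousOn.congr fun _ ↦ barrierSlope_of_le
  have habove : ContinuousOn (barrierSlope φ η b) (Ici b) :=
    hη.congr fun _ ↦ barrierSlope_of_ge hφb
  rw [← continuousOn_univ, ← Iic_union_Ici (a := b)]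
  exact hbelow.union_of_isClosed habove isClosed_Iic isClosed_Ici

end BarrierSlope

namespace IsBarrierValue

variable {φ η v : ℝ → ℝ} {b : ℝ}

theorem hasDerivWithinAt_Icc (h : IsBarrierValue φ η b v) (hφ : Differentiable ℝ φ) {x : ℝ}
    (hx : x ∈ Icc 0 b) :
    HasDerivWithinAt v (η b / deriv φ b * deriv φ x) (Icc 0 b) x :=
  ((hφ x).hasDerivAt.const_mul _).hasDerivWithinAt.congr h.eq_below (h.eq_below x hx)

theorem hasDerivWithinAt_Ici (h : IsBarrierValue φ η b v) (hη : ContinuousOn η (Ici b)) {x : ℝ}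
    (hx : x ∈ Ici b) : HasDerivWithinAt v (η x) (Ici b) x :=
  ((hasDerivWithinAt_integral_Ici hη hx).const_add _).congr h.eq_above (h.eq_above x hx)

theorem hasDerivWithinAt (h : IsBarrierValue φ η b v) (hφ : Differentiable ℝ φ)
    (hφb : deriv φ b ≠ 0) (hη : ContinuousOn η (Ici b)) (hb : 0 ≤ b) (x : ℝ) :
    HasDerivWithinAt v (barrierSlope φ η b x) (Ici 0) x := by
  rw [← Icc_union_Ici_eq_Ici hb]
  refine hasDerivWithinAt_union_of_isClosed isClosed_Icc isClosed_Ici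
    (fun y hy ↦ ?_) (fun y hy ↦ ?_) x
  · rw [barrierSlope_of_le hy.2]
    exact h.hasDerivWithinAt_Icc hφ hy
  · rw [barrierSlope_of_ge hφb hy]
    exact h.hasDerivWithinAt_Ici hη hy

theorem contDiffOn (h : IsBarrierValue φ η b v) (hφ : ContDiff ℝ 1 φ)
    (hφb : deriv φ b ≠ 0) (hη : ContinuousOn η (Ici b)) (hb : 0 ≤ b) :
    ContDiffOn ℝ 1 v (Ici 0) :=
  contDiffOn_one_of_hasDerivWithinAt (uniqueDiffOn_Ici 0)
    (fun x _ ↦ h.hasDerivWithinAt (hφ.differentiable one_ne_zero) hφb hη hb x)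
    (continuous_barrierSlope hφ.continuous_deriv_one hφb hη).continuousOn

theorem derivWithin_zero (h : IsBarrierValue φ η b v) (hφ : Differentiable ℝ φ)
    (hφ0 : deriv φ 0 = 0) (hb : 0 < b) : derivWithin v (Ici 0) 0 = 0 := by
  have hderiv : HasDerivWithinAt v (η b / deriv φ b * deriv φ 0) (Ici 0) 0 :=
    (h.hasDerivWithinAt_Icc hφ (left_mem_Icc.2 hb.le)).mono_of_mem_nhdsWithin
      (Icc_mem_nhdsGE hb)
  rw [hderiv.derivWithin (uniqueDiffWithinAt_Ici 0), hφ0, mul_zero]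

theorem killedGenerator_eq (h : IsBarrierValue φ η b v) (μ σ r : ℝ) {x : ℝ} (hx : x ∈ Ioo 0 b) :
    killedGenerator μ σ r v x = η b / deriv φ b * killedGenerator μ σ r φ x := by
  have hlocal : v =ᶠ[𝓝 x] fun y ↦ η b / deriv φ b * φ y :=
    eventually_of_mem (Icc_mem_nhds hx.1 hx.2) h.eq_below
  rw [killedGenerator_congr hlocal, killedGenerator_const_mul]

theorem deriv_eq_of_gt (h : IsBarrierValue φ η b v) (hη : ContinuousOn η (Ici b)) {x : ℝ}
    (hx : b < x) : deriv v x = η x :=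
  ((h.hasDerivWithinAt_Ici hη hx.le).hasDerivAt (Ici_mem_nhds hx)).deriv

end IsBarrierValue

theorem stmt4_general (μ σ r : ℝ) (hσ : σ ≠ 0) (hr : r ≠ 0) (hdisc : 0 < μ ^ 2 + 2 * r * σ ^ 2)
    (γp γm : ℝ)
    (hγp : γp = (-μ + √(μ ^ 2 + 2 * r * σ ^ 2)) / σ ^ 2)
    (hγm : γm = (-μ - √(μ ^ 2 + 2 * r * σ ^ 2)) / σ ^ 2)
    (φ : ℝ → ℝ)
    (hφ : ∀ x, φ x = Real.exp (γp * x) / γp - Real.exp (γm * x) / γm)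
    (η : ℝ → ℝ) (b : ℝ) (hb : 0 < b) (hη : ContinuousOn η (Ici b))
    (vb : ℝ → ℝ)
    (hvb1 : ∀ x ∈ Icc 0 b, vb x = (η b / deriv φ b) * φ x)
    (hvb2 : ∀ x ∈ Ici b, vb x = η b * φ b / deriv φ b + ∫ u in b..x, η u) :
    ContDiffOn ℝ 1 vb (Ici 0) ∧
    derivWithin vb (Ici 0) 0 = 0 ∧
    (∀ x ∈ Ioo 0 b,
      -r * vb x + μ * deriv vb x + σ ^ 2 / 2 * deriv (deriv vb) x = 0) ∧
    (∀ x ∈ Ioi b, deriv vb x = η x) := by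
  obtain rfl : φ = reflectedSolution γp γm := funext hφ
  have hv : IsBarrierValue (reflectedSolution γp γm) η b vb := ⟨hvb1, hvb2⟩
  have hrootp : σ ^ 2 / 2 * γp ^ 2 + μ * γp - r = 0 :=
    (characteristic_eq_zero_iff hσ hdisc.le γp).2 (.inl hγp)
  have hrootm : σ ^ 2 / 2 * γm ^ 2 + μ * γm - r = 0 :=
    (characteristic_eq_zero_iff hσ hdisc.le γm).2 (.inr hγm)
  have hp : γp ≠ 0 := by rintro rfl; simp [hr] at hrootp
  have hm : γm ≠ 0 := by rintro rfl; simp [hr] at hrootm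
  have hne : γp ≠ γm := by
    have hsqrt := Real.sqrt_pos.2 hdisc
    rw [hγp, hγm, Ne, div_left_inj' (pow_ne_zero 2 hσ)]
    linarith
  have hφC1 : ContDiff ℝ 1 (reflectedSolution γp γm) := contDiff_reflectedSolution
  have hφb := deriv_reflectedSolution_ne_zero hp hm hne hb.ne'
  refine ⟨hv.contDiffOn hφC1 hφb hη hb.le,
    hv.derivWithin_zero (hφC1.differentiable one_ne_zero) (deriv_reflectedSolution_zero hp hm) hb,
    fun x hx ↦ ?_, fun x hx ↦ hv.deriv_eq_of_gt hη hx⟩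
  have hgen := hv.killedGenerator_eq μ σ r hx
  rwa [killedGenerator_reflectedSolution hp hm hrootp hrootm, mul_zero] at hgen

/-- The barrier-policy value `v_b` is continuously differentiable on `[0,∞)` with
`v_b'(0) = 0`; it satisfies `ℒv_b(x) = 0` on `(0, b)` and `v_b'(x) = η(x)` on `(b, ∞)`. -/
theorem stmt4 (μ σ r : ℝ) (hσ : 0 < σ) (hr : 0 < r)
    (γp γm : ℝ)
    (hγp : γp = (-μ + Real.sqrt (μ ^ 2 + 2 * r * σ ^ 2)) / σ ^ 2)
    (hγm : γm = (-μ - Real.sqrt (μ ^ 2 + 2 * r * σ ^ 2)) / σ ^ 2)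
    (φ : ℝ → ℝ)
    (hφ : ∀ x, φ x = Real.exp (γp * x) / γp - Real.exp (γm * x) / γm)
    (η : ℝ → ℝ) (hη : ContinuousOn η (Set.Ici 0))
    (b : ℝ) (hb : 0 < b)
    (vb : ℝ → ℝ)
    (hvb1 : ∀ x ∈ Set.Icc 0 b, vb x = (η b / deriv φ b) * φ x)
    (hvb2 : ∀ x ∈ Set.Ici b, vb x = η b * φ b / deriv φ b + ∫ u in b..x, η u) :
    ContDiffOn ℝ 1 vb (Set.Ici 0) ∧
    derivWithin vb (Set.Ici 0) 0 = 0 ∧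
    (∀ x ∈ Set.Ioo 0 b,
      -r * vb x + μ * deriv vb x + σ ^ 2 / 2 * deriv (deriv vb) x = 0) ∧
    (∀ x ∈ Set.Ioi b, deriv vb x = η x) := by
  exact stmt4_general μ σ r hσ.ne' hr.ne' (by positivity) γp γm hγp hγm φ hφ η b hb
    (hη.mono (Ici_subset_Ici.2 hb.le)) vb hvb1 hvb2
end

section
/- Suppose η is continuously differentiable on a neighborhood of b > 0 and η(b) ≥ 0. Then for every x ≥ 0 with x ≠ b, the sign of the derivative of c ↦ v_c(x) at c = b (positive, zero, or negative) coincides with the sign of η'(b)φ'(b) − η(b)φ''(b); in particular, this derivative is zero for some x ≥ 0 with x ≠ b if and only if it is zero for every such x, if and only if η'(b)φ'(b) = η(b)φ''(b). -/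
/-!
Put `E := η'(b) φ'(b) - η(b) φ''(b)`. For `x < b` only the factor `η(c) / φ'(c)` of `v_c(x)` depends
on `c`, so the derivative at `c = b` is `E φ(x) / φ'(b)²` by the quotient rule. For `x > b` the
product rule gives `E φ(b) / φ'(b)²` plus `(η(b) / φ'(b)) φ'(b) = η(b)`, and the lower limit of the
integral contributes `-η(b)`, which cancels. In both cases `∂_c v_c(x)|_{c = b}` is `E` times the
positive number `φ(min x b) / φ'(b)²`.
-/

open MeasureTheory Set Filter Topology

section BarrierValue

/-- The function `v_c` of a barrier at `c`: proportional to `φ` up to `c`, with slope `η` beyond.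
The barrier comes first among the real arguments, because it is the variable of differentiation. -/
noncomputable def barrierValue (φ η : ℝ → ℝ) (c x : ℝ) : ℝ :=
  if x ≤ c then (η c / deriv φ c) * φ x
  else η c * φ c / deriv φ c + ∫ u in c..x, η u

variable {φ η : ℝ → ℝ} {b x η' φ'' : ℝ}

theorem hasDerivAt_barrierValue_of_lt (hη : HasDerivAt η η' b)
    (hφ'' : HasDerivAt (deriv φ) φ'' b) (hφ' : deriv φ b ≠ 0) (hx : x < b) :
    HasDerivAt (fun c => barrierValue φ η c x)
      ((η' * deriv φ b - η b * φ'') / deriv φ b ^ 2 * φ x) b := by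
  have h_eq : (fun c => barrierValue φ η c x) =ᶠ[𝓝 b] fun c => η c / deriv φ c * φ x := by
    filter_upwards [lt_mem_nhds hx] with c hc
    exact if_pos hc.le
  exact ((hη.div hφ'' hφ').mul_const (φ x)).congr_of_eventuallyEq h_eq

theorem hasDerivAt_barrierValue_of_gt (hη : HasDerivAt η η' b)
    (hφ'' : HasDerivAt (deriv φ) φ'' b) (hφ' : deriv φ b ≠ 0)
    (h_int : IntervalIntegrable η volume b x) (h_meas : StronglyMeasurableAtFilter η (𝓝 b))
    (hx : b < x) :
    HasDerivAt (fun c => barrierValue φ η c x)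
      ((η' * deriv φ b - η b * φ'') / deriv φ b ^ 2 * φ b) b := by
  have h_eq : (fun c => barrierValue φ η c x) =ᶠ[𝓝 b]
      fun c => η c / deriv φ c * φ c + ∫ u in c..x, η u := by
    filter_upwards [gt_mem_nhds hx] with c hc
    rw [barrierValue, if_neg hc.not_ge, mul_div_right_comm]
  have h_phi : HasDerivAt φ (deriv φ b) b :=
    (differentiableAt_of_deriv_ne_zero hφ').hasDerivAt
  have h_integral : HasDerivAt (fun c => ∫ u in c..x, η u) (-η b) b :=
    intervalIntegral.integral_hasDerivAt_left h_int h_meas hη.continuousAt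
  refine ((((hη.div hφ'' hφ').mul h_phi).add h_integral).congr_of_eventuallyEq h_eq).congr_deriv ?_
  rw [Pi.div_apply, div_mul_cancel₀ _ hφ', add_neg_cancel_right]

theorem hasDerivAt_barrierValue (hη : HasDerivAt η η' b)
    (hφ'' : HasDerivAt (deriv φ) φ'' b) (hφ' : deriv φ b ≠ 0)
    (h_int : IntervalIntegrable η volume b x) (h_meas : StronglyMeasurableAtFilter η (𝓝 b))
    (hx : x ≠ b) :
    HasDerivAt (fun c => barrierValue φ η c x)
      ((η' * deriv φ b - η b * φ'') / deriv φ b ^ 2 * φ (min x b)) b := by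
  rcases hx.lt_or_gt with hlt | hgt
  · rw [min_eq_left hlt.le]
    exact hasDerivAt_barrierValue_of_lt hη hφ'' hφ' hlt
  · rw [min_eq_right hgt.le]
    exact hasDerivAt_barrierValue_of_gt hη hφ'' hφ' h_int h_meas hgt

theorem deriv_barrierValue_eq_mul (hb : 0 < b) (hφ' : deriv φ b ≠ 0)
    (hφ'' : DifferentiableAt ℝ (deriv φ) b) (hη : LocallyIntegrableOn η (Ici 0))
    (hη' : DifferentiableAt ℝ η b) (hx : 0 ≤ x) (hxb : x ≠ b) :
    deriv (fun c => barrierValue φ η c x) b =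
      (deriv η b * deriv φ b - η b * deriv (deriv φ) b) * (φ (min x b) / deriv φ b ^ 2) := by
  have h_int : IntervalIntegrable η volume b x :=
    (hη.integrableOn_compact_subset (ordConnected_Ici.uIcc_subset hb.le hx)
      isCompact_uIcc).intervalIntegrable
  have h_meas : StronglyMeasurableAtFilter η (𝓝 b) :=
    ⟨Ici 0, Ici_mem_nhds hb, hη.aestronglyMeasurable⟩
  rw [(hasDerivAt_barrierValue hη'.hasDerivAt hφ''.hasDerivAt hφ' h_int h_meas hxb).deriv,
    div_mul_eq_mul_div, mul_div_assoc]

end BarrierValue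

section NeumannSolution

theorem abs_lt_sqrt_sq_add (μ : ℝ) {d : ℝ} (hd : 0 < d) : |μ| < √(μ ^ 2 + d) :=
  Real.lt_sqrt_of_sq_lt (by rw [sq_abs]; exact lt_add_of_pos_right _ hd)

theorem neg_add_sqrt_div_pos (μ : ℝ) {d s : ℝ} (hd : 0 < d) (hs : 0 < s) :
    0 < (-μ + √(μ ^ 2 + d)) / s :=
  div_pos (by linarith [(abs_lt.mp (abs_lt_sqrt_sq_add μ hd)).2]) hs

theorem neg_sub_sqrt_div_neg (μ : ℝ) {d s : ℝ} (hd : 0 < d) (hs : 0 < s) :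
    (-μ - √(μ ^ 2 + d)) / s < 0 :=
  div_neg_of_neg_of_pos (by linarith [(abs_lt.mp (abs_lt_sqrt_sq_add μ hd)).1]) hs

/-- The combination of `e^{p x}` and `e^{m x}` whose derivative `e^{p x} - e^{m x}` vanishes at `0`.
For `p = γ₊` and `m = γ₋`, the roots of `σ² γ² / 2 + μ γ = r`, it is the function `φ`, which solves
`σ² f'' / 2 + μ f' = r f` with the Neumann condition `f'(0) = 0`. -/
noncomputable def neumannSolution (p m x : ℝ) : ℝ :=
  Real.exp (p * x) / p - Real.exp (m * x) / m

variable {p m : ℝ}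

theorem neumannSolution_pos (hp : 0 < p) (hm : m < 0) (x : ℝ) : 0 < neumannSolution p m x :=
  sub_pos.mpr <| (div_neg_of_pos_of_neg (Real.exp_pos _) hm).trans (div_pos (Real.exp_pos _) hp)

theorem hasDerivAt_neumannSolution (hp : p ≠ 0) (hm : m ≠ 0) (x : ℝ) :
    HasDerivAt (neumannSolution p m) (Real.exp (p * x) - Real.exp (m * x)) x := by
  have h := ((hasDerivAt_const_mul (x := x) p).exp.div_const p).sub
    ((hasDerivAt_const_mul (x := x) m).exp.div_const m)
  rwa [mul_div_cancel_right₀ _ hp, mul_div_cancel_right₀ _ hm] at h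

theorem deriv_neumannSolution (hp : p ≠ 0) (hm : m ≠ 0) :
    deriv (neumannSolution p m) = fun x => Real.exp (p * x) - Real.exp (m * x) :=
  deriv_eq (hasDerivAt_neumannSolution hp hm)

theorem deriv_neumannSolution_pos (hp : p ≠ 0) (hm : m ≠ 0) (hmp : m < p) {x : ℝ} (hx : 0 < x) :
    0 < deriv (neumannSolution p m) x := by
  rw [deriv_neumannSolution hp hm]
  exact sub_pos.mpr (Real.exp_lt_exp.mpr (mul_lt_mul_of_pos_right hmp hx))

theorem differentiable_deriv_neumannSolution (hp : p ≠ 0) (hm : m ≠ 0) :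
    Differentiable ℝ (deriv (neumannSolution p m)) := by
  rw [deriv_neumannSolution hp hm]
  fun_prop

end NeumannSolution

theorem stmt7_general {φ η : ℝ → ℝ} {b : ℝ} (hb : 0 < b)
    (hφ : ∀ x ∈ Icc 0 b, 0 < φ x)
    (hφ' : deriv φ b ≠ 0) (hφ'' : DifferentiableAt ℝ (deriv φ) b)
    (hη : LocallyIntegrableOn η (Ici 0)) (hη' : DifferentiableAt ℝ η b)
    {D : ℝ → ℝ} {E : ℝ} (hD : ∀ x, D x = deriv (fun c => barrierValue φ η c x) b)
    (hE : E = deriv η b * deriv φ b - η b * deriv (deriv φ) b) :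
    (∀ x : ℝ, 0 ≤ x → x ≠ b →
      ((0 < D x ↔ 0 < E) ∧ (D x = 0 ↔ E = 0) ∧ (D x < 0 ↔ E < 0))) ∧
    ((∃ x : ℝ, 0 ≤ x ∧ x ≠ b ∧ D x = 0) ↔ (∀ x : ℝ, 0 ≤ x → x ≠ b → D x = 0)) ∧
    ((∃ x : ℝ, 0 ≤ x ∧ x ≠ b ∧ D x = 0) ↔
      deriv η b * deriv φ b = η b * deriv (deriv φ) b) := by
  have h_sign (x : ℝ) (hx : 0 ≤ x) (hxb : x ≠ b) :
      (0 < D x ↔ 0 < E) ∧ (D x = 0 ↔ E = 0) ∧ (D x < 0 ↔ E < 0) := by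
    have h_factor : 0 < φ (min x b) / deriv φ b ^ 2 :=
      div_pos (hφ _ ⟨le_min hx hb.le, min_le_right x b⟩) (by positivity)
    rw [hD, deriv_barrierValue_eq_mul hb hφ' hφ'' hη hη' hx hxb, ← hE]
    exact ⟨mul_pos_iff_of_pos_right h_factor, mul_eq_zero_iff_right h_factor.ne',
      by simpa only [zero_mul] using mul_lt_mul_iff_left₀ (b := E) (c := 0) h_factor⟩
  have h_forall (hE0 : E = 0) (x : ℝ) (hx : 0 ≤ x) (hxb : x ≠ b) : D x = 0 :=
    (h_sign x hx hxb).2.1.mpr hE0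
  have h_exists : (∃ x : ℝ, 0 ≤ x ∧ x ≠ b ∧ D x = 0) ↔ E = 0 :=
    ⟨fun ⟨x, hx, hxb, hDx⟩ => (h_sign x hx hxb).2.1.mp hDx,
      fun hE0 => ⟨0, le_rfl, hb.ne, h_forall hE0 0 le_rfl hb.ne⟩⟩
  refine ⟨h_sign, ⟨fun h => h_forall (h_exists.mp h), fun h => ?_⟩, ?_⟩
  · exact ⟨0, le_rfl, hb.ne, h 0 le_rfl hb.ne⟩
  · rw [h_exists, hE, sub_eq_zero]

/-- If `η` is `C¹` near `b > 0` and `η(b) ≥ 0`, then for every `x ≥ 0` with `x ≠ b` the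
sign of the derivative of `c ↦ v_c(x)` at `c = b` coincides with the sign of
`E = η'(b)φ'(b) − η(b)φ''(b)`; in particular this derivative vanishes for some admissible
`x` iff it vanishes for all of them, iff `E = 0`. -/
theorem stmt7 (μ σ r : ℝ) (hσ : 0 < σ) (hr : 0 < r)
    (γp γm : ℝ)
    (hγp : γp = (-μ + Real.sqrt (μ ^ 2 + 2 * r * σ ^ 2)) / σ ^ 2)
    (hγm : γm = (-μ - Real.sqrt (μ ^ 2 + 2 * r * σ ^ 2)) / σ ^ 2)
    (φ : ℝ → ℝ)
    (hφ : ∀ x, φ x = Real.exp (γp * x) / γp - Real.exp (γm * x) / γm)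
    (η : ℝ → ℝ) (hη : ContinuousOn η (Set.Ici 0))
    (b : ℝ) (hb : 0 < b)
    (hη1 : ∃ U ∈ nhds b, ContDiffOn ℝ 1 η U)
    (hηb : 0 ≤ η b)
    (V : ℝ → ℝ → ℝ)
    (hV : ∀ c x : ℝ, V c x =
      if x ≤ c then (η c / deriv φ c) * φ x
      else η c * φ c / deriv φ c + ∫ u in c..x, η u)
    (D : ℝ → ℝ) (E : ℝ)
    (hD : ∀ x, D x = deriv (fun c => V c x) b)
    (hE : E = deriv η b * deriv φ b - η b * deriv (deriv φ) b) :
    (∀ x : ℝ, 0 ≤ x → x ≠ b →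
      ((0 < D x ↔ 0 < E) ∧ (D x = 0 ↔ E = 0) ∧ (D x < 0 ↔ E < 0))) ∧
    ((∃ x : ℝ, 0 ≤ x ∧ x ≠ b ∧ D x = 0) ↔ (∀ x : ℝ, 0 ≤ x → x ≠ b → D x = 0)) ∧
    ((∃ x : ℝ, 0 ≤ x ∧ x ≠ b ∧ D x = 0) ↔
      deriv η b * deriv φ b = η b * deriv (deriv φ) b) := by
  obtain rfl : φ = neumannSolution γp γm := funext hφ
  obtain rfl : V = barrierValue (neumannSolution γp γm) η := funext₂ hV
  obtain ⟨U, hU, hηU⟩ := hη1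
  have hp : 0 < γp := hγp ▸ neg_add_sqrt_div_pos μ (by positivity) (by positivity)
  have hm : γm < 0 := hγm ▸ neg_sub_sqrt_div_neg μ (by positivity) (by positivity)
  exact stmt7_general hb (fun x _ => neumannSolution_pos hp hm x)
    (deriv_neumannSolution_pos hp.ne' hm.ne (hm.trans hp) hb).ne'
    (differentiable_deriv_neumannSolution hp.ne' hm.ne b)
    (hη.locallyIntegrableOn measurableSet_Ici)
    ((hηU.contDiffAt hU).differentiableAt one_ne_zero) hD hE
end

section
/- For the parameter values σ = √2, μ = 0.508378, r = 0.00520074, the equation b² − b = (e^{γ₊b} − e^{γ₋b})/(γ₊e^{γ₊b} − γ₋e^{γ₋b}) has at least three distinct solutions in (1, ∞): there exist b₁ ∈ (4.18, 4.19), b₂ ∈ (5.76, 5.77) and b₃ ∈ (8.00, 8.01) each satisfying the equation. -/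
/-!
Cancelling `e^{γ₋b}` turns the right-hand side into `(t - 1) / (γ₊ t - γ₋)` with
`t = e^{(γ₊ - γ₋)b}`. This is increasing in `t`, decreasing in `γ₊` and increasing in `γ₋`, so
rational enclosures of `γ₊`, `γ₋` and Taylor bounds for the exponential enclose it. At the endpoints
of each of the three intervals these bounds determine which side of the equation is larger, the
order is reversed from one end to the other, and the intermediate value theorem gives a solution.
-/

open Set
open scoped Nat

/-- The Taylor polynomial of `exp` at `0` with `n` terms, hence of degree `n - 1`; its values at
rational points are the rational bounds used for the exponential. -/
noncomputable def expTaylor (n : ℕ) (x : ℝ) : ℝ :=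
  ∑ i ∈ Finset.range n, x ^ i / i !

lemma one_le_expTaylor {n : ℕ} (hn : 0 < n) {x : ℝ} (hx : 0 ≤ x) : 1 ≤ expTaylor n x := by
  simpa [expTaylor] using
    Finset.single_le_sum (f := fun i : ℕ ↦ x ^ i / (i ! : ℝ)) (fun i _ ↦ by positivity)
      (Finset.mem_range.2 hn)

lemma expTaylor_div_pow_le_exp {x : ℝ} (hx : 0 ≤ x) (n : ℕ) {k : ℕ} (hk : k ≠ 0) :
    expTaylor n (x / k) ^ k ≤ Real.exp x :=
  calc
    expTaylor n (x / k) ^ k ≤ Real.exp (x / k) ^ k :=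
      pow_le_pow_left₀ (Finset.sum_nonneg fun i _ ↦ by positivity)
        (Real.sum_le_exp_of_nonneg (by positivity) n) k
    _ = Real.exp x := by rw [← Real.exp_nat_mul, mul_div_cancel₀ x (Nat.cast_ne_zero.2 hk)]

lemma exp_le_expTaylor_div_add_pow {x : ℝ} {k n : ℕ} (hx : 0 ≤ x) (hk : k ≠ 0) (hxk : x ≤ k)
    (hn : 0 < n) :
    Real.exp x ≤ (expTaylor n (x / k) + (x / k) ^ n * (n + 1) / (n ! * n)) ^ k :=
  calc
    Real.exp x = Real.exp (x / k) ^ k := by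
      rw [← Real.exp_nat_mul, mul_div_cancel₀ x (Nat.cast_ne_zero.2 hk)]
    _ ≤ (expTaylor n (x / k) + (x / k) ^ n * (n + 1) / (n ! * n)) ^ k :=
      pow_le_pow_left₀ (Real.exp_pos _).le
        (Real.exp_bound' (by positivity) (div_le_one_of_le₀ hxk k.cast_nonneg) hn) k

/-- The quotient `W b / W' b` for the function `W b = e^{pb} - e^{qb}`, which up to a factor is the
scale function of a Brownian motion with drift when `p` and `q` are the characteristic roots. -/
noncomputable def scaleRatio (p q b : ℝ) : ℝ :=
  (Real.exp (p * b) - Real.exp (q * b)) / (p * Real.exp (p * b) - q * Real.exp (q * b))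

/-- The quotient `W / W'` of `scaleRatio` as a function of `t = e^{(p - q)b}`. -/
noncomputable def scaleQuotient (p q t : ℝ) : ℝ :=
  (t - 1) / (p * t - q)

lemma scaleRatio_eq_scaleQuotient_exp (p q b : ℝ) :
    scaleRatio p q b = scaleQuotient p q (Real.exp ((p - q) * b)) := by
  have hexp : Real.exp (p * b) = Real.exp (q * b) * Real.exp ((p - q) * b) := by
    rw [← Real.exp_add]
    ring_nf
  calc
    scaleRatio p q b = Real.exp (q * b) * (Real.exp ((p - q) * b) - 1) /
        (Real.exp (q * b) * (p * Real.exp ((p - q) * b) - q)) := by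
      rw [scaleRatio, hexp]
      congr 1 <;> ring
    _ = scaleQuotient p q (Real.exp ((p - q) * b)) :=
      mul_div_mul_left _ _ (Real.exp_ne_zero _)

lemma continuous_scaleRatio {p q : ℝ} (hp : 0 ≤ p) (hq : q < 0) : Continuous (scaleRatio p q) := by
  unfold scaleRatio
  refine Continuous.div (by fun_prop) (by fun_prop) fun b ↦ ne_of_gt ?_
  have hpos : 0 ≤ p * Real.exp (p * b) := by positivity
  linarith [mul_neg_of_neg_of_pos hq (Real.exp_pos (q * b))]

lemma scaleQuotient_le_scaleQuotient {p p' q q' t t' : ℝ} (hp' : 0 ≤ p') (hqp : q' < p')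
    (hp : p' ≤ p) (hq : q ≤ q') (ht : 1 ≤ t) (htt' : t ≤ t') :
    scaleQuotient p q t ≤ scaleQuotient p' q' t' := by
  have hden : p' * t - q' ≤ p * t - q := by gcongr
  have hden_pos : 0 < p' * t - q' := by linarith [le_mul_of_one_le_right hp' ht]
  have hden_pos' : 0 < p' * t' - q' := by linarith [mul_le_mul_of_nonneg_left htt' hp']
  calc
    (t - 1) / (p * t - q) ≤ (t - 1) / (p' * t - q') :=
      div_le_div_of_nonneg_left (sub_nonneg.2 ht) hden_pos hden
    _ ≤ (t' - 1) / (p' * t' - q') := by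
      rw [div_le_div_iff₀ hden_pos hden_pos']
      -- The difference of the two sides is `(p' - q') * (t' - t)`.
      linarith [mul_nonneg (sub_nonneg.2 hqp.le) (sub_nonneg.2 htt')]

section Enclosure

variable {p₀ p p₁ q₀ q q₁ b : ℝ} {k n : ℕ}

lemma scaleQuotient_expTaylor_le_scaleRatio (hp : p ∈ Icc p₀ p₁) (hq : q ∈ Icc q₀ q₁)
    (hp₀ : 0 ≤ p₀) (hqp : q₁ < p₀) (hb : 0 ≤ b) (hk : k ≠ 0) (hn : 0 < n) :
    scaleQuotient p₁ q₀ (expTaylor n ((p₀ - q₁) * b / k) ^ k) ≤ scaleRatio p q b := by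
  have harg : 0 ≤ (p₀ - q₁) * b := mul_nonneg (sub_nonneg.2 hqp.le) hb
  rw [scaleRatio_eq_scaleQuotient_exp]
  refine scaleQuotient_le_scaleQuotient (hp₀.trans hp.1) (hq.2.trans_lt (hqp.trans_le hp.1))
    hp.2 hq.1 (one_le_pow₀ (one_le_expTaylor hn (by positivity))) ?_
  calc
    expTaylor n ((p₀ - q₁) * b / k) ^ k ≤ Real.exp ((p₀ - q₁) * b) :=
      expTaylor_div_pow_le_exp harg n hk
    _ ≤ Real.exp ((p - q) * b) := by
      gcongr
      exacts [hp.1, hq.2]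

lemma scaleRatio_le_scaleQuotient_expTaylor_add (hp : p ∈ Icc p₀ p₁) (hq : q ∈ Icc q₀ q₁)
    (hp₀ : 0 ≤ p₀) (hqp : q₁ < p₀) (hb : 0 ≤ b) (hk : k ≠ 0) (hn : 0 < n)
    (hbk : (p₁ - q₀) * b ≤ k) :
    scaleRatio p q b ≤ scaleQuotient p₀ q₁ ((expTaylor n ((p₁ - q₀) * b / k) +
      ((p₁ - q₀) * b / k) ^ n * (n + 1) / (n ! * n)) ^ k) := by
  have hpq : q < p := hq.2.trans_lt (hqp.trans_le hp.1)
  have hle : (p - q) * b ≤ (p₁ - q₀) * b := by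
    gcongr
    exacts [hp.2, hq.1]
  have harg : 0 ≤ (p - q) * b := mul_nonneg (sub_nonneg.2 hpq.le) hb
  rw [scaleRatio_eq_scaleQuotient_exp]
  refine scaleQuotient_le_scaleQuotient hp₀ hqp hp.1 hq.2 (Real.one_le_exp harg) ?_
  calc
    Real.exp ((p - q) * b) ≤ Real.exp ((p₁ - q₀) * b) := Real.exp_le_exp.2 hle
    _ ≤ _ := exp_le_expTaylor_div_add_pow (harg.trans hle) hk hbk hn

end Enclosure

lemma exists_mem_Ioo_eq_of_lt_of_gt {f g : ℝ → ℝ} {a c : ℝ} (hac : a ≤ c)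
    (hf : ContinuousOn f (Icc a c)) (hg : ContinuousOn g (Icc a c)) (ha : f a < g a)
    (hc : g c < f c) : ∃ b ∈ Ioo a c, f b = g b := by
  obtain ⟨b, hb, hzero⟩ :=
    intermediate_value_Ioo hac (hf.sub hg) ⟨sub_neg.2 ha, sub_pos.2 hc⟩
  exact ⟨b, hb, sub_eq_zero.1 hzero⟩

section Crossings

variable {p q : ℝ}

-- On all three intervals `(p - q) * b < 5`, so `k = 8` brings the Taylor argument below `1`; the
-- smallest relative margin, about `1.6e-5` (at `5.76`), is then resolved by `n = 7` terms.
lemma exists_sq_sub_self_eq_scaleRatio_first (hp : p ∈ Icc (0.010032 : ℝ) 0.0100321)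
    (hq : q ∈ Icc (-0.5184101 : ℝ) (-0.51841)) :
    ∃ b ∈ Ioo (4.18 : ℝ) 4.19, b ^ 2 - b = scaleRatio p q b := by
  have h_left : (4.18 : ℝ) ^ 2 - 4.18 < scaleRatio p q 4.18 :=
    lt_of_lt_of_le (by norm_num [scaleQuotient, expTaylor, Finset.sum_range_succ, Nat.factorial])
      (scaleQuotient_expTaylor_le_scaleRatio hp hq (k := 8) (n := 7) (by norm_num) (by norm_num)
        (by norm_num) (by norm_num) (by norm_num))
  have h_right : scaleRatio p q 4.19 < 4.19 ^ 2 - 4.19 :=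
    lt_of_le_of_lt (scaleRatio_le_scaleQuotient_expTaylor_add hp hq (k := 8) (n := 7) (by norm_num)
        (by norm_num) (by norm_num) (by norm_num) (by norm_num) (by norm_num))
      (by norm_num [scaleQuotient, expTaylor, Finset.sum_range_succ, Nat.factorial])
  have hcont : Continuous (scaleRatio p q) :=
    continuous_scaleRatio (by linarith [hp.1]) (by linarith [hq.2])
  exact exists_mem_Ioo_eq_of_lt_of_gt (f := fun b ↦ b ^ 2 - b) (by norm_num) (by fun_prop)
    hcont.continuousOn h_left h_right

lemma exists_sq_sub_self_eq_scaleRatio_second (hp : p ∈ Icc (0.010032 : ℝ) 0.0100321)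
    (hq : q ∈ Icc (-0.5184101 : ℝ) (-0.51841)) :
    ∃ b ∈ Ioo (5.76 : ℝ) 5.77, b ^ 2 - b = scaleRatio p q b := by
  have h_left : scaleRatio p q 5.76 < 5.76 ^ 2 - 5.76 :=
    lt_of_le_of_lt (scaleRatio_le_scaleQuotient_expTaylor_add hp hq (k := 8) (n := 7) (by norm_num)
        (by norm_num) (by norm_num) (by norm_num) (by norm_num) (by norm_num))
      (by norm_num [scaleQuotient, expTaylor, Finset.sum_range_succ, Nat.factorial])
  have h_right : (5.77 : ℝ) ^ 2 - 5.77 < scaleRatio p q 5.77 :=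
    lt_of_lt_of_le (by norm_num [scaleQuotient, expTaylor, Finset.sum_range_succ, Nat.factorial])
      (scaleQuotient_expTaylor_le_scaleRatio hp hq (k := 8) (n := 7) (by norm_num) (by norm_num)
        (by norm_num) (by norm_num) (by norm_num))
  have hcont : Continuous (scaleRatio p q) :=
    continuous_scaleRatio (by linarith [hp.1]) (by linarith [hq.2])
  obtain ⟨b, hb, hEq⟩ := exists_mem_Ioo_eq_of_lt_of_gt (f := scaleRatio p q)
    (g := fun b ↦ b ^ 2 - b) (by norm_num) hcont.continuousOn (by fun_prop) h_left h_right
  exact ⟨b, hb, hEq.symm⟩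

lemma exists_sq_sub_self_eq_scaleRatio_third (hp : p ∈ Icc (0.010032 : ℝ) 0.0100321)
    (hq : q ∈ Icc (-0.5184101 : ℝ) (-0.51841)) :
    ∃ b ∈ Ioo (8.00 : ℝ) 8.01, b ^ 2 - b = scaleRatio p q b := by
  have h_left : (8.00 : ℝ) ^ 2 - 8.00 < scaleRatio p q 8.00 :=
    lt_of_lt_of_le (by norm_num [scaleQuotient, expTaylor, Finset.sum_range_succ, Nat.factorial])
      (scaleQuotient_expTaylor_le_scaleRatio hp hq (k := 8) (n := 7) (by norm_num) (by norm_num)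
        (by norm_num) (by norm_num) (by norm_num))
  have h_right : scaleRatio p q 8.01 < 8.01 ^ 2 - 8.01 :=
    lt_of_le_of_lt (scaleRatio_le_scaleQuotient_expTaylor_add hp hq (k := 8) (n := 7) (by norm_num)
        (by norm_num) (by norm_num) (by norm_num) (by norm_num) (by norm_num))
      (by norm_num [scaleQuotient, expTaylor, Finset.sum_range_succ, Nat.factorial])
  have hcont : Continuous (scaleRatio p q) :=
    continuous_scaleRatio (by linarith [hp.1]) (by linarith [hq.2])
  exact exists_mem_Ioo_eq_of_lt_of_gt (f := fun b ↦ b ^ 2 - b) (by norm_num) (by fun_prop)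
    hcont.continuousOn h_left h_right

end Crossings

/-- For `σ = √2`, `μ = 0.508378`, `r = 0.00520074`, the equation
`b² − b = (e^{γ₊b} − e^{γ₋b})/(γ₊e^{γ₊b} − γ₋e^{γ₋b})` has at least three distinct
solutions in `(1, ∞)`: one in `(4.18, 4.19)`, one in `(5.76, 5.77)`, one in `(8.00, 8.01)`. -/
theorem stmt9 (σ μ r : ℝ)
    (hσ : σ = Real.sqrt 2) (hμ : μ = 0.508378) (hr : r = 0.00520074)
    (γp γm : ℝ)
    (hγp : γp = (-μ + Real.sqrt (μ ^ 2 + 2 * r * σ ^ 2)) / σ ^ 2)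
    (hγm : γm = (-μ - Real.sqrt (μ ^ 2 + 2 * r * σ ^ 2)) / σ ^ 2) :
    ∃ b₁ ∈ Set.Ioo (4.18 : ℝ) 4.19, ∃ b₂ ∈ Set.Ioo (5.76 : ℝ) 5.77,
      ∃ b₃ ∈ Set.Ioo (8.00 : ℝ) 8.01,
      (b₁ ^ 2 - b₁ = (Real.exp (γp * b₁) - Real.exp (γm * b₁)) /
        (γp * Real.exp (γp * b₁) - γm * Real.exp (γm * b₁))) ∧
      (b₂ ^ 2 - b₂ = (Real.exp (γp * b₂) - Real.exp (γm * b₂)) /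
        (γp * Real.exp (γp * b₂) - γm * Real.exp (γm * b₂))) ∧
      (b₃ ^ 2 - b₃ = (Real.exp (γp * b₃) - Real.exp (γm * b₃)) /
        (γp * Real.exp (γp * b₃) - γm * Real.exp (γm * b₃))) := by
  have hσ_sq : σ ^ 2 = 2 := hσ ▸ Real.sq_sqrt (by norm_num)
  rw [hσ_sq] at hγp hγm
  have hs : √(μ ^ 2 + 2 * r * 2) ∈ Icc (0.5284421 : ℝ) 0.5284422 := by
    rw [hμ, hr]
    exact ⟨Real.le_sqrt_of_sq_le (by norm_num), Real.sqrt_le_iff.2 (by norm_num)⟩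
  have hp : γp ∈ Icc (0.010032 : ℝ) 0.0100321 := by
    constructor <;> linarith [hs.1, hs.2]
  have hq : γm ∈ Icc (-0.5184101 : ℝ) (-0.51841) := by
    constructor <;> linarith [hs.1, hs.2]
  obtain ⟨b₁, hb₁, h₁⟩ := exists_sq_sub_self_eq_scaleRatio_first hp hq
  obtain ⟨b₂, hb₂, h₂⟩ := exists_sq_sub_self_eq_scaleRatio_second hp hq
  obtain ⟨b₃, hb₃, h₃⟩ := exists_sq_sub_self_eq_scaleRatio_third hp hq
  exact ⟨b₁, hb₁, b₂, hb₂, b₃, hb₃, h₁, h₂, h₃⟩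
end

section
/- Suppose 1 < b₁ < θ < λ, that b₁ satisfies the smooth-fit equation η(b₁)φ''(b₁) = η'(b₁)φ'(b₁), and that (C₁, C₂, D, θ, λ) satisfies the five matching equations: C₁e^{γ₊θ} + C₂e^{γ₋θ} = B + θ − b₁ − log(θ/b₁); C₁γ₊e^{γ₊θ} + C₂γ₋e^{γ₋θ} = 1 − 1/θ; C₁e^{γ₊λ} + C₂e^{γ₋λ} = D; C₁γ₊e^{γ₊λ} + C₂γ₋e^{γ₋λ} = 1 − 1/λ; C₁γ₊²e^{γ₊λ} + C₂γ₋²e^{γ₋λ} = 1/λ². Then the function v* is continuously differentiable on [0,∞) with (v*)'(0) = 0, it is twice continuously differentiable on [0,θ) and on (θ,∞), it satisfies ℒv*(x) = 0 for all x ∈ (0,b₁) ∪ (θ,λ), and (v*)'(x) = η(x) for all x ∈ (b₁,θ) ∪ (λ,∞). -/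
/-!
A function that agrees with a `C^n` function to the left of a point and with another one to its
right is `C^n` as soon as the derivatives of the two pieces up to order `n` agree at that point.
All four pieces of `v*` are smooth up to and beyond their knots, so only the jets at the knots
matter. The choice of `A` and the smooth-fit equation match two derivatives at `b₁`, the last two
matching equations match two derivatives at `λ`, but at `θ` only the first derivative is matched.
-/

open Set Filter Topology

section Continuity

variable {X Y : Type*} [TopologicalSpace X] [TopologicalSpace Y] {v f g : X → Y} {s : Set X}
  {a x : X}

theorem continuousWithinAt_inter_of_eqOn {t : Set X} (ht : IsClosed t) (hx : x ∈ s)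
    (hvf : EqOn v f (s ∩ t)) (hf : x ∈ t → ContinuousAt f x) :
    ContinuousWithinAt v (s ∩ t) x := by
  by_cases hxt : x ∈ t
  · exact (hf hxt).continuousWithinAt.congr hvf (hvf ⟨hx, hxt⟩)
  · exact continuousWithinAt_of_notMem_closure fun h =>
      hxt (closure_minimal inter_subset_right ht h)

theorem continuousAt_of_eqOn_Iic_of_eqOn_Ici [LinearOrder X] [OrderClosedTopology X]
    (hs : s ∈ 𝓝 x) (hvf : EqOn v f (s ∩ Iic a)) (hvg : EqOn v g (s ∩ Ici a))
    (hf : x ≤ a → ContinuousAt f x) (hg : a ≤ x → ContinuousAt g x) : ContinuousAt v x := by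
  have hx : x ∈ s := mem_of_mem_nhds hs
  have hpaste := (continuousWithinAt_inter_of_eqOn isClosed_Iic hx hvf hf).union
    (continuousWithinAt_inter_of_eqOn isClosed_Ici hx hvg hg)
  rw [← inter_union_distrib_left, Iic_union_Ici, inter_univ] at hpaste
  exact hpaste.continuousAt hs

end Continuity

section Pasting

variable {E : Type*} [NormedAddCommGroup E] [NormedSpace ℝ E] {v f g : ℝ → E} {s : Set ℝ}
  {a x : ℝ}

theorem hasDerivWithinAt_inter_of_eqOn {t : Set ℝ} {d : E} (ht : IsClosed t) (hx : x ∈ s)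
    (hvf : EqOn v f (s ∩ t)) (hf : x ∈ t → HasDerivAt f d x) :
    HasDerivWithinAt v d (s ∩ t) x := by
  by_cases hxt : x ∈ t
  · exact (hf hxt).hasDerivWithinAt.congr hvf (hvf ⟨hx, hxt⟩)
  · exact hasDerivWithinAt_iff_hasFDerivWithinAt.mpr <| .of_notMem_closure fun h =>
      hxt (closure_minimal inter_subset_right ht h)

theorem hasDerivAt_of_eqOn_Iic_of_eqOn_Ici {d : E} (hs : s ∈ 𝓝 x)
    (hvf : EqOn v f (s ∩ Iic a)) (hvg : EqOn v g (s ∩ Ici a))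
    (hf : x ≤ a → HasDerivAt f d x) (hg : a ≤ x → HasDerivAt g d x) : HasDerivAt v d x := by
  have hx : x ∈ s := mem_of_mem_nhds hs
  have hpaste := (hasDerivWithinAt_inter_of_eqOn isClosed_Iic hx hvf hf).union
    (hasDerivWithinAt_inter_of_eqOn isClosed_Ici hx hvg hg)
  rw [← inter_union_distrib_left, Iic_union_Ici, inter_univ] at hpaste
  exact hpaste.hasDerivAt hs

theorem contDiffOn_of_eqOn_Iic_of_eqOn_Ici {n : ℕ} (hs : IsOpen s) (hf : ContDiffOn ℝ n f s)
    (hg : ContDiffOn ℝ n g s) (hvf : EqOn v f (s ∩ Iic a)) (hvg : EqOn v g (s ∩ Ici a))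
    (hjet : ∀ k < n, iteratedDeriv (k + 1) f a = iteratedDeriv (k + 1) g a) :
    ContDiffOn ℝ n v s := by
  induction n generalizing v f g with
  | zero =>
    simp only [Nat.cast_zero, contDiffOn_zero] at hf hg ⊢
    exact fun x hx => (continuousAt_of_eqOn_Iic_of_eqOn_Ici (hs.mem_nhds hx) hvf hvg
      (fun _ => hf.continuousAt (hs.mem_nhds hx))
      (fun _ => hg.continuousAt (hs.mem_nhds hx))).continuousWithinAt
  | succ n ih =>
    push_cast at hf hg ⊢
    rw [contDiffOn_succ_iff_deriv_of_isOpen hs] at hf hg ⊢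
    obtain ⟨hf, -, hf'⟩ := hf
    obtain ⟨hg, -, hg'⟩ := hg
    have hslope : deriv f a = deriv g a := by simpa using hjet 0 n.succ_pos
    have hvf' : ∀ x ∈ s ∩ Iic a, HasDerivAt v (deriv f x) x := fun x ⟨hx, hxa⟩ =>
      hasDerivAt_of_eqOn_Iic_of_eqOn_Ici (hs.mem_nhds hx) hvf hvg
        (fun _ => (hf.differentiableAt (hs.mem_nhds hx)).hasDerivAt) fun hax => by
          obtain rfl := le_antisymm hxa hax
          exact hslope ▸ (hg.differentiableAt (hs.mem_nhds hx)).hasDerivAt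
    have hvg' : ∀ x ∈ s ∩ Ici a, HasDerivAt v (deriv g x) x := fun x ⟨hx, hax⟩ =>
      hasDerivAt_of_eqOn_Iic_of_eqOn_Ici (hs.mem_nhds hx) hvf hvg
        (fun hxa => by
          obtain rfl := le_antisymm hxa hax
          exact hslope ▸ (hf.differentiableAt (hs.mem_nhds hx)).hasDerivAt)
        fun _ => (hg.differentiableAt (hs.mem_nhds hx)).hasDerivAt
    refine ⟨fun x hx => ?_, by simp, ih hf' hg' (fun x hx => (hvf' x hx).deriv)
      (fun x hx => (hvg' x hx).deriv) fun k hk => ?_⟩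
    · rcases le_total x a with hxa | hax
      · exact (hvf' x ⟨hx, hxa⟩).differentiableAt.differentiableWithinAt
      · exact (hvg' x ⟨hx, hax⟩).differentiableAt.differentiableWithinAt
    · simpa only [iteratedDeriv_succ'] using hjet (k + 1) (Nat.succ_lt_succ hk)

theorem contDiffOn_of_inter_Iio_of_inter_Ioi {n : WithTop ℕ∞} {b : ℝ} (hab : a < b)
    (hIio : ContDiffOn ℝ n v (s ∩ Iio b)) (hIoi : ContDiffOn ℝ n v (s ∩ Ioi a)) :
    ContDiffOn ℝ n v s := by
  refine contDiffOn_of_locally_contDiffOn fun x _ => ?_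
  rcases lt_or_ge x b with hxb | hbx
  · exact ⟨Iio b, isOpen_Iio, hxb, hIio⟩
  · exact ⟨Ioi a, isOpen_Ioi, hab.trans_le hbx, hIoi⟩

end Pasting

section Primitive

variable {E : Type*} [NormedAddCommGroup E] [NormedSpace ℝ E]

/-- The primitive of `η` taking the value `K` at `a`. -/
noncomputable def primitiveFrom (a : ℝ) (K : E) (η : ℝ → E) (x : ℝ) : E :=
  K + ∫ u in a..x, η u

theorem primitiveFrom_self (a : ℝ) (K : E) (η : ℝ → E) : primitiveFrom a K η a = K := by
  simp [primitiveFrom]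

variable [CompleteSpace E] {v f η : ℝ → E} {s : Set ℝ} {a x : ℝ} {K : E}

theorem hasDerivAt_primitiveFrom (hs : IsOpen s) [s.OrdConnected] (hη : ContinuousOn η s)
    (ha : a ∈ s) (hx : x ∈ s) : HasDerivAt (primitiveFrom a K η) (η x) x :=
  (intervalIntegral.integral_hasDerivAt_right
    (hη.mono (OrdConnected.uIcc_subset ‹_› ha hx)).intervalIntegrable
    (hη.stronglyMeasurableAtFilter hs x hx) (hη.continuousAt (hs.mem_nhds hx))).const_add K

theorem contDiffOn_primitiveFrom {n : ℕ} (hs : IsOpen s) [s.OrdConnected]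
    (hη : ContDiffOn ℝ n η s) (ha : a ∈ s) : ContDiffOn ℝ (n + 1) (primitiveFrom a K η) s := by
  have hderiv := fun x hx => hasDerivAt_primitiveFrom (K := K) (x := x) hs hη.continuousOn ha hx
  rw [contDiffOn_succ_iff_deriv_of_isOpen hs]
  exact ⟨fun x hx => (hderiv x hx).differentiableAt.differentiableWithinAt, by simp,
    hη.congr fun x hx => (hderiv x hx).deriv⟩

theorem deriv_eqOn_of_eqOn_primitiveFrom {t : Set ℝ} (hs : IsOpen s) [s.OrdConnected]
    (hη : ContinuousOn η s) (ha : a ∈ s) (ht : IsOpen t) (hts : t ⊆ s)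
    (hv : EqOn v (primitiveFrom a K η) t) : EqOn (deriv v) η t := fun _ hx =>
  (hv.deriv ht hx).trans (hasDerivAt_primitiveFrom hs hη ha (hts hx)).deriv

theorem iteratedDeriv_succ_primitiveFrom (k : ℕ) (hs : IsOpen s) [s.OrdConnected]
    (hη : ContinuousOn η s) (ha : a ∈ s) (hx : x ∈ s) :
    iteratedDeriv (k + 1) (primitiveFrom a K η) x = iteratedDeriv k η x := by
  rw [iteratedDeriv_succ']
  refine EventuallyEq.iteratedDeriv_eq k ?_
  filter_upwards [hs.mem_nhds hx] with y hy using (hasDerivAt_primitiveFrom hs hη ha hy).deriv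

theorem contDiffOn_of_eqOn_Iic_of_eqOn_primitiveFrom {n : ℕ} (hs : IsOpen s) [s.OrdConnected]
    (ha : a ∈ s) (hf : ContDiffOn ℝ (n + 1) f s) (hη : ContDiffOn ℝ n η s)
    (hvf : EqOn v f (s ∩ Iic a)) (hvη : EqOn v (primitiveFrom a K η) (s ∩ Ici a))
    (hfit : ∀ k ≤ n, iteratedDeriv (k + 1) f a = iteratedDeriv k η a) :
    ContDiffOn ℝ (n + 1) v s :=
  contDiffOn_of_eqOn_Iic_of_eqOn_Ici (n := n + 1) hs hf (contDiffOn_primitiveFrom hs hη ha)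
    hvf hvη fun k hk => (hfit k (Nat.lt_succ_iff.mp hk)).trans
      (iteratedDeriv_succ_primitiveFrom k hs hη.continuousOn ha ha).symm

end Primitive

section Slope

/-- The slope `η(x) = max(1 - 1/x, 0)`, extended by zero to `x ≤ 0`, prescribed to `v*` on the
regions `(b₁, θ)` and `(λ, ∞)`. -/
noncomputable def prescribedSlope (x : ℝ) : ℝ := if 0 < x then max (1 - 1 / x) 0 else 0

variable {v : ℝ → ℝ} {s : Set ℝ} {a x K : ℝ}

theorem prescribedSlope_of_one_le (hx : 1 ≤ x) : prescribedSlope x = 1 - 1 / x := by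
  have hx0 : 0 < x := one_pos.trans_le hx
  rw [prescribedSlope, if_pos hx0, max_eq_left (sub_nonneg.mpr ((div_le_one hx0).mpr hx))]

theorem contDiffOn_prescribedSlope {n : WithTop ℕ∞} : ContDiffOn ℝ n prescribedSlope (Ioi 1) :=
  (contDiffOn_const.sub (contDiffOn_const.div contDiffOn_id fun _ hx =>
    (one_pos.trans hx).ne')).congr fun _ hx => prescribedSlope_of_one_le (le_of_lt hx)

theorem deriv_prescribedSlope (hx : 1 < x) : deriv prescribedSlope x = 1 / x ^ 2 := by
  have hslope : EqOn prescribedSlope (fun y => 1 - y⁻¹) (Ioi 1) := fun y hy => by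
    rw [prescribedSlope_of_one_le (le_of_lt hy), one_div]
  rw [hslope.deriv isOpen_Ioi hx, deriv_const_sub, deriv_inv, neg_neg, one_div]

theorem primitiveFrom_prescribedSlope (ha : 1 ≤ a) (hax : a ≤ x) :
    primitiveFrom a K prescribedSlope x = K + x - a - Real.log (x / a) := by
  have ha0 : 0 < a := one_pos.trans_le ha
  have hslope : EqOn prescribedSlope (fun u => 1 - 1 / u) (uIcc a x) := fun u hu => by
    rw [uIcc_of_le hax] at hu
    exact prescribedSlope_of_one_le (ha.trans hu.1)
  have hint : IntervalIntegrable (fun u : ℝ => 1 / u) MeasureTheory.volume a x :=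
    intervalIntegral.intervalIntegrable_one_div
      (fun u hu => (ha0.trans_le (uIcc_of_le hax ▸ hu).1).ne') continuousOn_id
  rw [primitiveFrom, intervalIntegral.integral_congr hslope,
    intervalIntegral.integral_sub intervalIntegrable_const hint,
    integral_one_div_of_pos ha0 (ha0.trans_le hax), intervalIntegral.integral_const, smul_eq_mul,
    mul_one, add_sub, add_sub]

theorem deriv_eqOn_prescribedSlope (ha : 1 < a) (hs : IsOpen s) (hs1 : s ⊆ Ioi 1)
    (hv : EqOn v (primitiveFrom a K prescribedSlope) s) : EqOn (deriv v) prescribedSlope s :=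
  deriv_eqOn_of_eqOn_primitiveFrom isOpen_Ioi (contDiffOn_prescribedSlope (n := 0)).continuousOn
    ha hs hs1 hv

end Slope

section Generator

/-- The operator `ℒv = -r v + μ v' + (σ²/2) v''`. -/
noncomputable def generator (r μ σ : ℝ) (v : ℝ → ℝ) (x : ℝ) : ℝ :=
  -r * v x + μ * deriv v x + σ ^ 2 / 2 * deriv (deriv v) x

/-- The symbol of `ℒ`, that is, the polynomial `p` with `ℒ e^{γx} = p(γ) e^{γx}`. -/
noncomputable def generatorSymbol (r μ σ γ : ℝ) : ℝ := -r + μ * γ + σ ^ 2 / 2 * γ ^ 2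

variable {r μ σ : ℝ}

theorem generatorSymbol_eq_zero_iff {γ : ℝ} (hσ : σ ≠ 0) (hr : 0 ≤ r) :
    generatorSymbol r μ σ γ = 0 ↔ γ = (-μ + √(μ ^ 2 + 2 * r * σ ^ 2)) / σ ^ 2 ∨
      γ = (-μ - √(μ ^ 2 + 2 * r * σ ^ 2)) / σ ^ 2 := by
  have hdiscrim : discrim (σ ^ 2 / 2) μ (-r) =
      √(μ ^ 2 + 2 * r * σ ^ 2) * √(μ ^ 2 + 2 * r * σ ^ 2) := by
    rw [Real.mul_self_sqrt (by positivity), discrim]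
    ring
  have hroots := quadratic_eq_zero_iff (by positivity) hdiscrim γ
  rw [mul_div_cancel₀ _ two_ne_zero] at hroots
  rw [← hroots, generatorSymbol]
  ring_nf

theorem generatorSymbol_root_pos (hσ : σ ≠ 0) (hr : 0 < r) :
    0 < (-μ + √(μ ^ 2 + 2 * r * σ ^ 2)) / σ ^ 2 := by
  have : μ < √(μ ^ 2 + 2 * r * σ ^ 2) :=
    Real.lt_sqrt_of_sq_lt (lt_add_of_pos_right _ (by positivity))
  exact div_pos (by linarith) (by positivity)

theorem generatorSymbol_root_neg (hσ : σ ≠ 0) (hr : 0 < r) :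
    (-μ - √(μ ^ 2 + 2 * r * σ ^ 2)) / σ ^ 2 < 0 := by
  have : -√(μ ^ 2 + 2 * r * σ ^ 2) < μ :=
    Real.neg_sqrt_lt_of_sq_lt (lt_add_of_pos_right _ (by positivity))
  exact div_neg_of_neg_of_pos (by linarith) (by positivity)

/-- The exponential sum `x ↦ c e^{αx} + d e^{βx}`. -/
noncomputable def expSum (α β c d x : ℝ) : ℝ := c * Real.exp (α * x) + d * Real.exp (β * x)

variable {α β c d x : ℝ}

theorem deriv_expSum (α β c d : ℝ) :
    deriv (expSum α β c d) = expSum α β (c * α) (d * β) := by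
  have hexp : ∀ γ x : ℝ, HasDerivAt (fun y => Real.exp (γ * y)) (Real.exp (γ * x) * γ) x :=
    fun γ x => by simpa using ((hasDerivAt_id x).const_mul γ).exp
  ext x
  refine (((hexp α x).const_mul c).add ((hexp β x).const_mul d)).deriv.trans ?_
  rw [expSum]
  ring

theorem contDiff_expSum {n : WithTop ℕ∞} : ContDiff ℝ n (expSum α β c d) := by
  unfold expSum
  fun_prop

theorem generator_eqOn_zero_of_eqOn_expSum {v : ℝ → ℝ} {s : Set ℝ} (hs : IsOpen s)
    (hα : generatorSymbol r μ σ α = 0) (hβ : generatorSymbol r μ σ β = 0)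
    (hv : EqOn v (expSum α β c d) s) : EqOn (generator r μ σ v) 0 s := fun x hx => by
  have hv' := hv.deriv hs
  simp only [generator, hv hx, hv' hx, hv'.deriv hs hx, deriv_expSum, expSum, Pi.zero_apply]
  rw [generatorSymbol] at hα hβ
  linear_combination c * Real.exp (α * x) * hα + d * Real.exp (β * x) * hβ

/-- The function `φ(x) = e^{αx}/α - e^{βx}/β`: up to scaling, the exponential sum with exponents
`α` and `β` whose derivative vanishes at `0`. -/
noncomputable def reflectedExp (α β x : ℝ) : ℝ := Real.exp (α * x) / α - Real.exp (β * x) / β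

theorem const_mul_reflectedExp (A α β : ℝ) :
    (fun x => A * reflectedExp α β x) = expSum α β (A / α) (-(A / β)) := by
  ext x
  simp only [reflectedExp, expSum]
  ring

theorem deriv_reflectedExp (hα : α ≠ 0) (hβ : β ≠ 0) :
    deriv (reflectedExp α β) = fun x => Real.exp (α * x) - Real.exp (β * x) := by
  have hsum : reflectedExp α β = expSum α β (1 / α) (-(1 / β)) := by
    simpa using const_mul_reflectedExp 1 α β
  ext x
  rw [hsum, deriv_expSum, expSum]
  field_simp
  ring

theorem deriv_reflectedExp_pos (hα : α ≠ 0) (hβ : β ≠ 0) (hβα : β < α) (hx : 0 < x) :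
    0 < deriv (reflectedExp α β) x := by
  rw [deriv_reflectedExp hα hβ, sub_pos, Real.exp_lt_exp]
  exact mul_lt_mul_of_pos_right hβα hx

end Generator

section SmoothFit

variable {v f η : ℝ → ℝ} {a b c e K : ℝ}

theorem eqOn_Icc_of_eqOn_Ioc (ha : v a = f a) (hvf : EqOn v f (Ioc a b)) :
    EqOn v f (Icc a b) :=
  fun _ hx => hx.1.eq_or_lt.elim (fun h => h ▸ ha) fun h => hvf ⟨h, hx.2⟩

theorem eqOn_Ici_of_eqOn_Ioi (ha : v a = f a) (hvf : EqOn v f (Ioi a)) : EqOn v f (Ici a) :=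
  fun _ hx => (mem_Ici.mp hx).eq_or_lt.elim (fun h => h ▸ ha) fun h => hvf h

theorem derivWithin_Ici_eq_deriv_of_eqOn_Icc (hab : a < b) (hvf : EqOn v f (Icc a b))
    (hf : DifferentiableAt ℝ f a) : derivWithin v (Ici a) a = deriv f a := by
  have hvf' : v =ᶠ[𝓝[≥] a] f := hvf.eventuallyEq_of_mem (Icc_mem_nhdsGE hab)
  rw [hvf'.derivWithin_eq_of_mem self_mem_Ici,
    hf.derivWithin (uniqueDiffOn_Ici a a self_mem_Ici)]

theorem iteratedDeriv_succ_eq_of_le_one (hfη : deriv f a = η a)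
    (hfη' : deriv (deriv f) a = deriv η a) :
    ∀ k ≤ 1, iteratedDeriv (k + 1) f a = iteratedDeriv k η a := by
  intro k hk
  interval_cases k
  · simpa
  · simpa [iteratedDeriv_succ']

theorem smoothFit_of_mul_deriv_eq {φ : ℝ → ℝ} (hφ : deriv φ a ≠ 0)
    (hfit : η a * deriv (deriv φ) a = deriv η a * deriv φ a) :
    ∀ k ≤ 1, iteratedDeriv (k + 1) (fun x => η a / deriv φ a * φ x) a = iteratedDeriv k η a := by
  refine iteratedDeriv_succ_eq_of_le_one ?_ ?_
  · rw [deriv_const_mul_field, div_mul_cancel₀ _ hφ]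
  · rw [deriv_const_mul_field', deriv_const_mul_field, div_mul_eq_mul_div, hfit,
      mul_div_cancel_right₀ _ hφ]

theorem contDiffOn_Ico_of_eqOn_Icc_of_eqOn_primitiveFrom {n : ℕ} (hab : a < b) (hcb : c < b)
    (hbe : b < e) (hf : ContDiff ℝ (n + 1) f) (hη : ContDiffOn ℝ n η (Ioi c))
    (hvf : EqOn v f (Icc a b)) (hvη : EqOn v (primitiveFrom b K η) (Ico b e))
    (hfit : ∀ k ≤ n, iteratedDeriv (k + 1) f b = iteratedDeriv k η b) :
    ContDiffOn ℝ (n + 1) v (Ico a e) := by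
  refine contDiffOn_of_inter_Iio_of_inter_Ioi (max_lt hab hcb)
    (hf.contDiffOn.congr fun x hx => hvf ⟨hx.1.1, le_of_lt hx.2⟩) ?_
  suffices h : ContDiffOn ℝ (n + 1) v (Ioo (max a c) e) from
    h.mono fun x hx => ⟨hx.2, hx.1.2⟩
  exact contDiffOn_of_eqOn_Iic_of_eqOn_primitiveFrom isOpen_Ioo ⟨max_lt hab hcb, hbe⟩
    hf.contDiffOn (hη.mono fun x hx => (le_max_right a c).trans_lt hx.1)
    (fun x hx => hvf ⟨(le_max_left a c).trans hx.1.1.le, hx.2⟩)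
    (fun x hx => hvη ⟨hx.2, hx.1.2⟩) hfit

theorem contDiffOn_of_smoothFit_of_deriv_eq {n : ℕ} {q : ℝ → ℝ} {θ l B D : ℝ}
    (hab : a < b) (hcb : c < b) (hbθ : b < θ) (hθl : θ < l) (hf : ContDiff ℝ (n + 1) f)
    (hq : ContDiff ℝ (n + 1) q) (hη : ContDiffOn ℝ n η (Ioi c)) (hvf : EqOn v f (Icc a b))
    (hvb : EqOn v (primitiveFrom b B η) (Icc b θ)) (hvq : EqOn v q (Icc θ l))
    (hvl : EqOn v (primitiveFrom l D η) (Ici l))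
    (hfit_b : ∀ k ≤ n, iteratedDeriv (k + 1) f b = iteratedDeriv k η b)
    (hfit_θ : deriv q θ = η θ)
    (hfit_l : ∀ k ≤ n, iteratedDeriv (k + 1) q l = iteratedDeriv k η l) :
    ContDiffOn ℝ 1 v (Ici a) ∧ ContDiffOn ℝ (n + 1) v (Ico a θ) ∧
      ContDiffOn ℝ (n + 1) v (Ioi θ) := by
  have hone : (1 : WithTop ℕ∞) ≤ n + 1 := le_add_self
  have hbelow : ContDiffOn ℝ (n + 1) v (Ico a θ) :=
    contDiffOn_Ico_of_eqOn_Icc_of_eqOn_primitiveFrom hab hcb hbθ hf hη hvf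
      (hvb.mono Ico_subset_Icc_self) hfit_b
  have habove : ContDiffOn ℝ (n + 1) v (Ioi θ) :=
    contDiffOn_of_eqOn_Iic_of_eqOn_primitiveFrom isOpen_Ioi hθl hq.contDiffOn
      (hη.mono (Ioi_subset_Ioi (hcb.trans hbθ).le)) (fun x hx => hvq ⟨le_of_lt hx.1, hx.2⟩)
      (fun x hx => hvl hx.2) hfit_l
  have hprim : ContDiffOn ℝ (n + 1) (primitiveFrom b B η) (Ioi c) :=
    contDiffOn_primitiveFrom isOpen_Ioi hη hcb
  have hderiv : deriv (primitiveFrom b B η) θ = η θ :=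
    (hasDerivAt_primitiveFrom isOpen_Ioi hη.continuousOn hcb (hcb.trans hbθ)).deriv
  have hacross : ContDiffOn ℝ (1 : ℕ) v (Ioo b l) :=
    contDiffOn_of_eqOn_Iic_of_eqOn_Ici (a := θ) isOpen_Ioo
      ((hprim.of_le hone).mono fun x hx => hcb.trans hx.1) (hq.of_le hone).contDiffOn
      (fun x hx => hvb ⟨hx.1.1.le, hx.2⟩) (fun x hx => hvq ⟨hx.2, hx.1.2.le⟩)
      fun k hk => by
        obtain rfl := Nat.lt_one_iff.mp hk
        simpa only [zero_add, iteratedDeriv_one] using hderiv.trans hfit_θ.symm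
  have hright : ContDiffOn ℝ 1 v (Ioi b) :=
    contDiffOn_of_inter_Iio_of_inter_Ioi hθl hacross
      ((habove.of_le hone).mono inter_subset_right)
  exact ⟨contDiffOn_of_inter_Iio_of_inter_Ioi hbθ (hbelow.of_le hone)
    (hright.mono inter_subset_right), hbelow, habove⟩

end SmoothFit

section Candidate

variable {v : ℝ → ℝ} {α β c₁ d₁ c₂ d₂ A B D b θ l : ℝ}

theorem derivWithin_Ici_zero_of_eqOn_reflectedExp (hα : α ≠ 0) (hβ : β ≠ 0) (hb : 0 < b)
    (hv : EqOn v (fun x => A * reflectedExp α β x) (Icc 0 b)) :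
    derivWithin v (Ici 0) 0 = 0 := by
  have hdiff : Differentiable ℝ (fun x => A * reflectedExp α β x) := by
    rw [const_mul_reflectedExp]
    exact contDiff_expSum.differentiable one_ne_zero
  rw [derivWithin_Ici_eq_deriv_of_eqOn_Icc hb hv (hdiff 0), deriv_const_mul_field,
    deriv_reflectedExp hα hβ]
  simp

theorem reflectedExp_smoothFit {η : ℝ → ℝ} (hα : 0 < α) (hβ : β < 0) (hb : 0 < b)
    (hA : A = η b / deriv (reflectedExp α β) b)
    (hfit : η b * deriv (deriv (reflectedExp α β)) b =
      deriv η b * deriv (reflectedExp α β) b) :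
    ∀ k ≤ 1, iteratedDeriv (k + 1) (expSum α β (A / α) (-(A / β))) b = iteratedDeriv k η b := by
  rw [← const_mul_reflectedExp, hA]
  exact smoothFit_of_mul_deriv_eq
    (deriv_reflectedExp_pos hα.ne' hβ.ne (hβ.trans hα) hb).ne' hfit

theorem contDiffOn_of_matching (hb : 1 < b) (hbθ : b < θ) (hθl : θ < l)
    (hvf : EqOn v (expSum α β c₁ d₁) (Icc 0 b))
    (hvb : EqOn v (primitiveFrom b B prescribedSlope) (Icc b θ))
    (hvq : EqOn v (expSum α β c₂ d₂) (Icc θ l))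
    (hvl : EqOn v (primitiveFrom l D prescribedSlope) (Ici l))
    (hfit_b : ∀ k ≤ 1,
      iteratedDeriv (k + 1) (expSum α β c₁ d₁) b = iteratedDeriv k prescribedSlope b)
    (hfit_θ : expSum α β (c₂ * α) (d₂ * β) θ = 1 - 1 / θ)
    (hfit_l : expSum α β (c₂ * α) (d₂ * β) l = 1 - 1 / l)
    (hfit_l' : expSum α β (c₂ * α ^ 2) (d₂ * β ^ 2) l = 1 / l ^ 2) :
    ContDiffOn ℝ 1 v (Ici 0) ∧ ContDiffOn ℝ 2 v (Ico 0 θ) ∧ ContDiffOn ℝ 2 v (Ioi θ) := by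
  have hθ : 1 < θ := hb.trans hbθ
  have hl : 1 < l := hθ.trans hθl
  have hθ' : deriv (expSum α β c₂ d₂) θ = prescribedSlope θ := by
    rw [deriv_expSum, hfit_θ, prescribedSlope_of_one_le hθ.le]
  have hl' : deriv (expSum α β c₂ d₂) l = prescribedSlope l := by
    rw [deriv_expSum, hfit_l, prescribedSlope_of_one_le hl.le]
  have hl'' : deriv (deriv (expSum α β c₂ d₂)) l = deriv prescribedSlope l := by
    rw [deriv_expSum, deriv_expSum, deriv_prescribedSlope hl, mul_assoc, mul_assoc, ← sq, ← sq,
      hfit_l']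
  simpa only [Nat.cast_one, one_add_one_eq_two] using
    contDiffOn_of_smoothFit_of_deriv_eq (n := 1) (one_pos.trans hb) hb hbθ hθl
      contDiff_expSum contDiff_expSum contDiffOn_prescribedSlope hvf hvb hvq hvl hfit_b hθ'
      (iteratedDeriv_succ_eq_of_le_one hl' hl'')

end Candidate

/-- Under the smooth-fit equation at `b₁` and the five matching equations at `θ` and `λ`,
the candidate value function `v*` is `C¹` on `[0,∞)` with `(v*)'(0) = 0`, it is `C²` on
`[0,θ)` and on `(θ,∞)`, it satisfies `ℒv* = 0` on `(0,b₁) ∪ (θ,λ)` and `(v*)' = η` on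
`(b₁,θ) ∪ (λ,∞)`. -/
theorem stmt10 (μ σ r : ℝ) (hσ : 0 < σ) (hr : 0 < r)
    (γp γm : ℝ)
    (hγp : γp = (-μ + Real.sqrt (μ ^ 2 + 2 * r * σ ^ 2)) / σ ^ 2)
    (hγm : γm = (-μ - Real.sqrt (μ ^ 2 + 2 * r * σ ^ 2)) / σ ^ 2)
    (φ : ℝ → ℝ)
    (hφ : ∀ x, φ x = Real.exp (γp * x) / γp - Real.exp (γm * x) / γm)
    (η : ℝ → ℝ)
    (hη : ∀ x, η x = if 0 < x then max (1 - 1 / x) 0 else 0)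
    (b₁ θ lam C₁ C₂ D A B : ℝ)
    (hb₁ : 1 < b₁) (hθ : b₁ < θ) (hlam : θ < lam)
    (hA : A = η b₁ / deriv φ b₁) (hB : B = A * φ b₁)
    (hfit : η b₁ * deriv (deriv φ) b₁ = deriv η b₁ * deriv φ b₁)
    (heq1 : C₁ * Real.exp (γp * θ) + C₂ * Real.exp (γm * θ) =
      B + θ - b₁ - Real.log (θ / b₁))
    (heq2 : C₁ * γp * Real.exp (γp * θ) + C₂ * γm * Real.exp (γm * θ) = 1 - 1 / θ)
    (heq3 : C₁ * Real.exp (γp * lam) + C₂ * Real.exp (γm * lam) = D)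
    (heq4 : C₁ * γp * Real.exp (γp * lam) + C₂ * γm * Real.exp (γm * lam) = 1 - 1 / lam)
    (heq5 : C₁ * γp ^ 2 * Real.exp (γp * lam) + C₂ * γm ^ 2 * Real.exp (γm * lam) =
      1 / lam ^ 2)
    (vstar : ℝ → ℝ)
    (hv1 : ∀ x ∈ Set.Icc 0 b₁, vstar x = A * φ x)
    (hv2 : ∀ x ∈ Set.Ioc b₁ θ, vstar x = B + x - b₁ - Real.log (x / b₁))
    (hv3 : ∀ x ∈ Set.Ioc θ lam,
      vstar x = C₁ * Real.exp (γp * x) + C₂ * Real.exp (γm * x))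
    (hv4 : ∀ x ∈ Set.Ioi lam, vstar x = D + ∫ u in lam..x, η u) :
    ContDiffOn ℝ 1 vstar (Set.Ici 0) ∧
    derivWithin vstar (Set.Ici 0) 0 = 0 ∧
    ContDiffOn ℝ 2 vstar (Set.Ico 0 θ) ∧
    ContDiffOn ℝ 2 vstar (Set.Ioi θ) ∧
    (∀ x ∈ Set.Ioo 0 b₁ ∪ Set.Ioo θ lam,
      -r * vstar x + μ * deriv vstar x + σ ^ 2 / 2 * deriv (deriv vstar) x = 0) ∧
    (∀ x ∈ Set.Ioo b₁ θ ∪ Set.Ioi lam, deriv vstar x = η x) := by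
  obtain rfl : φ = reflectedExp γp γm := funext hφ
  obtain rfl : η = prescribedSlope := funext hη
  have hp : 0 < γp := hγp ▸ generatorSymbol_root_pos hσ.ne' hr
  have hm : γm < 0 := hγm ▸ generatorSymbol_root_neg hσ.ne' hr
  have hrp := (generatorSymbol_eq_zero_iff hσ.ne' hr.le).mpr (.inl hγp)
  have hrm := (generatorSymbol_eq_zero_iff hσ.ne' hr.le).mpr (.inr hγm)
  have hb₁0 : 0 < b₁ := one_pos.trans hb₁
  have hlam1 : 1 < lam := hb₁.trans (hθ.trans hlam)
  have hvf : EqOn vstar (expSum γp γm (A / γp) (-(A / γm))) (Icc 0 b₁) :=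
    const_mul_reflectedExp A γp γm ▸ hv1
  have hvb : EqOn vstar (primitiveFrom b₁ B prescribedSlope) (Icc b₁ θ) :=
    eqOn_Icc_of_eqOn_Ioc (by rw [primitiveFrom_self, hv1 b₁ ⟨hb₁0.le, le_rfl⟩, hB])
      fun x hx => (hv2 x hx).trans (primitiveFrom_prescribedSlope hb₁.le hx.1.le).symm
  have hvq : EqOn vstar (expSum γp γm C₁ C₂) (Icc θ lam) :=
    eqOn_Icc_of_eqOn_Ioc ((hv2 θ ⟨hθ, le_rfl⟩).trans heq1.symm) hv3
  have hvl : EqOn vstar (primitiveFrom lam D prescribedSlope) (Ici lam) :=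
    eqOn_Ici_of_eqOn_Ioi (by rw [primitiveFrom_self, hv3 lam ⟨hlam, le_rfl⟩, heq3]) hv4
  have hℒ : EqOn (generator r μ σ vstar) 0 (Ioo 0 b₁ ∪ Ioo θ lam) :=
    (generator_eqOn_zero_of_eqOn_expSum isOpen_Ioo hrp hrm (hvf.mono Ioo_subset_Icc_self)).union
      (generator_eqOn_zero_of_eqOn_expSum isOpen_Ioo hrp hrm (hvq.mono Ioo_subset_Icc_self))
  have hslope : EqOn (deriv vstar) prescribedSlope (Ioo b₁ θ ∪ Ioi lam) :=
    (deriv_eqOn_prescribedSlope hb₁ isOpen_Ioo (fun _ hx => hb₁.trans hx.1)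
      (hvb.mono Ioo_subset_Icc_self)).union
      (deriv_eqOn_prescribedSlope hlam1 isOpen_Ioi (Ioi_subset_Ioi hlam1.le)
        (hvl.mono Ioi_subset_Ici_self))
  obtain ⟨hC1, hC2, hC2'⟩ := contDiffOn_of_matching hb₁ hθ hlam hvf hvb hvq hvl
    (reflectedExp_smoothFit hp hm hb₁0 hA hfit) heq2 heq4 heq5
  exact ⟨hC1, derivWithin_Ici_zero_of_eqOn_reflectedExp hp.ne' hm.ne hb₁0 hv1, hC2, hC2', hℒ,
    hslope⟩
end

section
/- Suppose η : [0,∞) → ℝ vanishes on [0, x*], is continuous on [0,∞), is strictly increasing, concave and differentiable on (x*, ∞), and is bounded above, where x* > 0. Then the smooth-fit equation γ₊·η(b) = η'(b) has exactly one solution b* in (x*, ∞). -/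
/-! The smooth-fit equation says that the logarithmic derivative `η' / η` takes the value `γ₊ > 0`.
For a positive concave function on `(a, ∞)` that is continuous on `[a, ∞)` with `η a = 0`, the
logarithmic derivative takes a positive value at most once, because where `η' > 0` the numerator
decreases while the denominator increases. It is unbounded above near `a`, where `η` vanishes, and
the tangent inequality at `x`, evaluated at `a`, bounds it by `1 / (x - a)`. Since `η' / η` is the
derivative of `log ∘ η`, Darboux's theorem shows that it takes every positive value. -/

section

open Set

variable {f : ℝ → ℝ} {s : Set ℝ} {a b c x y : ℝ}

theorem strictMonoOn_Ici_of_Ioi {α β : Type*} [LinearOrder α] [DenselyOrdered α]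
    [TopologicalSpace α] [OrderTopology α] [NoMaxOrder α] [LinearOrder β] [TopologicalSpace β]
    [OrderClosedTopology β] {f : α → β} {a : α} (hf : StrictMonoOn f (Ioi a))
    (hfa : ContinuousWithinAt f (Ici a) a) : StrictMonoOn f (Ici a) := by
  have hmono : MonotoneOn f (Ici a) := by
    rw [← Ioi_insert]
    exact hf.monotoneOn.insert_of_continuousWithinAt
      (mem_closure_iff_clusterPt.1 (closure_Ioi a ▸ self_mem_Ici)) (hfa.mono Ioi_subset_Ici_self)
  intro x hx y _ hxy
  obtain ⟨z, hxz, hzy⟩ := exists_between hxy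
  have haz : a < z := hx.trans_lt hxz
  exact (hmono hx haz.le hxz.le).trans_lt (hf haz (haz.trans hzy) hzy)

theorem concaveOn_Ici_of_Ioi (hf : ConcaveOn ℝ (Ioi a) f) (hcont : ContinuousOn f (Ici a))
    (hdiff : ∀ x ∈ Ioi a, DifferentiableAt ℝ f x) : ConcaveOn ℝ (Ici a) f := by
  refine AntitoneOn.concaveOn_of_deriv (convex_Ici a) hcont ?_ ?_ <;> rw [interior_Ici]
  · exact fun x hx ↦ (hdiff x hx).differentiableWithinAt
  · exact hf.antitoneOn_deriv hdiff

theorem logDeriv_lt_logDeriv_of_concaveOn (hf : ConcaveOn ℝ s f) (hx : x ∈ s) (hy : y ∈ s)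
    (hxy : x < y) (hdx : DifferentiableAt ℝ f x) (hdy : DifferentiableAt ℝ f y) (hfx : 0 < f x)
    (hfy : 0 < f y) (hlog : 0 < logDeriv f y) : logDeriv f y < logDeriv f x := by
  have hderiv_pos : 0 < deriv f y := (div_pos_iff_of_pos_right hfy).1 hlog
  have hle_slope : deriv f y ≤ slope f x y := hf.deriv_le_slope hx hy hxy hdy
  have hderiv_le : deriv f y ≤ deriv f x := hle_slope.trans (hf.slope_le_deriv hx hy hxy hdx)
  have hlt : f x < f y := (slope_pos_iff_of_le hxy.le).1 (hderiv_pos.trans_le hle_slope)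
  exact div_lt_div₀' hderiv_le hlt (hderiv_pos.trans_le hderiv_le) hfx

theorem logDeriv_le_inv_sub_of_concaveOn (hf : ConcaveOn ℝ s f) (ha : a ∈ s) (hx : x ∈ s)
    (hax : a < x) (hdx : DifferentiableAt ℝ f x) (hfa : 0 ≤ f a) (hfx : 0 < f x) :
    logDeriv f x ≤ (x - a)⁻¹ := by
  rw [logDeriv_apply, div_le_iff₀ hfx]
  calc deriv f x ≤ slope f a x := hf.deriv_le_slope ha hx hax hdx
    _ = (x - a)⁻¹ * (f x - f a) := slope_def_module f a x
    _ ≤ (x - a)⁻¹ * f x :=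
      mul_le_mul_of_nonneg_left (sub_le_self _ hfa) (inv_nonneg.2 (sub_nonneg.2 hax.le))

theorem exists_mul_lt_deriv (c : ℝ) (hab : a < b) (hcont : ContinuousOn f (Icc a b))
    (hdiff : ∀ x ∈ Ioo a b, DifferentiableAt ℝ f x) (hfa : f a ≤ 0) (hfb : 0 < f b) :
    ∃ x ∈ Ioo a b, c * f x < deriv f x := by
  -- `c * f < f'` says that `x ↦ exp (-c x) f x` has positive derivative.
  have hderiv : ∀ x ∈ Ioo a b, HasDerivAt (fun t ↦ Real.exp (-(c * t)) * f t)
      (Real.exp (-(c * x)) * (deriv f x - c * f x)) x := by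
    intro x hx
    have hexp : HasDerivAt (fun t ↦ Real.exp (-(c * t))) (Real.exp (-(c * x)) * -(c * 1)) x :=
      ((hasDerivAt_id' x).const_mul c).neg.exp
    exact (hexp.mul (hdiff x hx).hasDerivAt).congr_deriv (by ring)
  obtain ⟨x, hx, hslope⟩ := exists_hasDerivAt_eq_slope _ _ hab
    (ContinuousOn.mul (by fun_prop) hcont) hderiv
  have hlt : Real.exp (-(c * a)) * f a < Real.exp (-(c * b)) * f b :=
    (mul_nonpos_of_nonneg_of_nonpos (Real.exp_pos _).le hfa).trans_lt
      (mul_pos (Real.exp_pos _) hfb)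
  have hpos : 0 < Real.exp (-(c * x)) * (deriv f x - c * f x) :=
    hslope ▸ div_pos (sub_pos.2 hlt) (sub_pos.2 hab)
  exact ⟨x, hx, sub_pos.1 (pos_of_mul_pos_right hpos (Real.exp_pos _).le)⟩

theorem ordConnected_image_logDeriv (hs : s.OrdConnected)
    (hdiff : ∀ x ∈ s, DifferentiableAt ℝ f x) (hne : ∀ x ∈ s, f x ≠ 0) :
    (logDeriv f '' s).OrdConnected := by
  have hlog : EqOn (deriv (Real.log ∘ f)) (logDeriv f) s := fun x hx ↦
    Real.deriv_log_comp_eq_logDeriv (hdiff x hx) (hne x hx)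
  rw [← hlog.image_eq]
  exact hs.image_deriv fun x hx ↦ (hdiff x hx).log (hne x hx)

theorem exists_logDeriv_eq_of_concaveOn (hf : ConcaveOn ℝ (Ici a) f)
    (hcont : ContinuousOn f (Ici a)) (hdiff : ∀ x ∈ Ioi a, DifferentiableAt ℝ f x)
    (hfa : f a = 0) (hpos : ∀ x ∈ Ioi a, 0 < f x) (hc : 0 < c) :
    ∃ x ∈ Ioi a, logDeriv f x = c := by
  have hac : a < a + c⁻¹ := lt_add_of_pos_right a (inv_pos.2 hc)
  obtain ⟨x, hx, hcx⟩ : ∃ x ∈ Ioo a (a + c⁻¹), c * f x < deriv f x :=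
    exists_mul_lt_deriv c hac (hcont.mono Icc_subset_Ici_self) (fun x hx ↦ hdiff x hx.1) hfa.le
      (hpos _ hac)
  have hlow : logDeriv f (a + c⁻¹) ≤ c := by
    simpa only [add_sub_cancel_left, inv_inv] using
      logDeriv_le_inv_sub_of_concaveOn hf self_mem_Ici hac.le hac (hdiff _ hac) hfa.ge (hpos _ hac)
  have hhigh : c ≤ logDeriv f x := ((lt_div_iff₀ (hpos x hx.1)).2 hcx).le
  exact (ordConnected_image_logDeriv ordConnected_Ioi hdiff fun x hx ↦ (hpos x hx).ne').out
    (mem_image_of_mem _ hac) (mem_image_of_mem _ hx.1) ⟨hlow, hhigh⟩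

theorem existsUnique_logDeriv_eq_of_concaveOn (hf : ConcaveOn ℝ (Ici a) f)
    (hcont : ContinuousOn f (Ici a)) (hdiff : ∀ x ∈ Ioi a, DifferentiableAt ℝ f x)
    (hfa : f a = 0) (hpos : ∀ x ∈ Ioi a, 0 < f x) (hc : 0 < c) :
    ∃! x, x ∈ Ioi a ∧ logDeriv f x = c := by
  have hanti : ∀ x ∈ Ioi a, ∀ y ∈ Ioi a, logDeriv f y = c → x < y → c < logDeriv f x := by
    rintro x hx y hy rfl hxy
    exact logDeriv_lt_logDeriv_of_concaveOn hf (Ioi_subset_Ici_self hx) (Ioi_subset_Ici_self hy)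
      hxy (hdiff x hx) (hdiff y hy) (hpos x hx) (hpos y hy) hc
  obtain ⟨x, hx, hcx⟩ := exists_logDeriv_eq_of_concaveOn hf hcont hdiff hfa hpos hc
  refine ⟨x, ⟨hx, hcx⟩, fun y ⟨hy, hcy⟩ ↦ ?_⟩
  rcases lt_trichotomy y x with hyx | hyx | hxy
  · exact absurd hcy (hanti y hy x hx hcx hyx).ne'
  · exact hyx
  · exact absurd hcx (hanti x hx y hy hcy hxy).ne'

theorem neg_add_sqrt_sq_add_pos (b : ℝ) (hc : 0 < c) : 0 < -b + √(b ^ 2 + c) :=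
  lt_neg_add_iff_lt.2 (Real.lt_sqrt_of_sq_lt (lt_add_of_pos_right _ hc))

theorem stmt15_general {γ a : ℝ} {η : ℝ → ℝ} (hγ : 0 < γ) (hcont : ContinuousOn η (Ici a))
    (hηa : η a = 0) (hpos : ∀ x ∈ Ioi a, 0 < η x) (hconc : ConcaveOn ℝ (Ioi a) η)
    (hdiff : ∀ x ∈ Ioi a, DifferentiableAt ℝ η x) :
    ∃! b : ℝ, b ∈ Ioi a ∧ γ * η b = deriv η b := by
  have hiff (b : ℝ) : b ∈ Ioi a ∧ γ * η b = deriv η b ↔ b ∈ Ioi a ∧ logDeriv η b = γ :=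
    and_congr_right fun hb ↦ by rw [logDeriv_apply, div_eq_iff (hpos b hb).ne', eq_comm]
  simp only [hiff]
  exact existsUnique_logDeriv_eq_of_concaveOn (concaveOn_Ici_of_Ioi hconc hcont hdiff) hcont hdiff
    hηa hpos hγ

end

/-- If `η` vanishes on `[0, x*]`, is continuous on `[0,∞)`, strictly increasing, concave
and differentiable on `(x*, ∞)`, and bounded above (`x* > 0`), then the smooth-fit equation
`γ₊·η(b) = η'(b)` has exactly one solution `b*` in `(x*, ∞)`. -/
theorem stmt15 (μ σ r : ℝ) (hσ : 0 < σ) (hr : 0 < r)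
    (γp : ℝ)
    (hγp : γp = (-μ + Real.sqrt (μ ^ 2 + 2 * r * σ ^ 2)) / σ ^ 2)
    (xstar : ℝ) (hx : 0 < xstar)
    (η : ℝ → ℝ)
    (hcont : ContinuousOn η (Set.Ici 0))
    (h0 : ∀ x ∈ Set.Icc 0 xstar, η x = 0)
    (hmono : StrictMonoOn η (Set.Ioi xstar))
    (hconc : ConcaveOn ℝ (Set.Ioi xstar) η)
    (hdiff : ∀ x ∈ Set.Ioi xstar, DifferentiableAt ℝ η x)
    (hbdd : ∃ M : ℝ, ∀ x ∈ Set.Ici (0 : ℝ), η x ≤ M) :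
    ∃! b : ℝ, b ∈ Set.Ioi xstar ∧ γp * η b = deriv η b := by
  have hγ : 0 < γp := hγp ▸ div_pos (neg_add_sqrt_sq_add_pos μ (by positivity)) (by positivity)
  have hcont' : ContinuousOn η (Set.Ici xstar) := hcont.mono (Set.Ici_subset_Ici.2 hx.le)
  have hη0 : η xstar = 0 := h0 xstar (Set.right_mem_Icc.2 hx.le)
  have hmono' := strictMonoOn_Ici_of_Ioi hmono (hcont' xstar Set.self_mem_Ici)
  exact stmt15_general hγ hcont' hη0
    (fun x hx' ↦ hη0 ▸ hmono' Set.self_mem_Ici (Set.Ioi_subset_Ici_self hx') hx') hconc hdiff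
end

section
/- Let I ⊆ ℝ be an interval, let η : I → ℝ be concave on I and differentiable at a point b* ∈ I with η(b*) ≥ 0 and γ₊·η(b*) = η'(b*). Then η(x) ≤ η(b*)·e^{γ₊(x−b*)} for every x ∈ I. (Equivalently, the no-reflection barrier value Ṽ_{b*} satisfies the verification inequality η(x) − Ṽ_{b*}'(x) ≤ 0 on {x ∈ I : x ≤ b*}.) -/
/-!
A concave function lies below its tangent at `b*`. The relation `η'(b*) = γ₊ η(b*)` turns that
tangent into `η(b*) (1 + γ₊ (x - b*))`, and `1 + t ≤ e ^ t` finishes since `η(b*) ≥ 0`. Both steps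
only involve the derivative of `η` at `b*` in the direction of `x`, so they work in any real vector
space.
-/

section Concave

variable {E : Type*} [AddCommGroup E] [Module ℝ E] {s : Set E} {f : E → ℝ} {a x : E}

theorem concaveOn_comp_add_smul (hf : ConcaveOn ℝ s f) (a v : E) :
    ConcaveOn ℝ ((fun t : ℝ ↦ a + t • v) ⁻¹' s) (fun t ↦ f (a + t • v)) :=
  (hf.translate_right a).comp_linearMap (LinearMap.toSpanSingleton ℝ E v)

theorem le_add_of_concaveOn_of_hasLineDerivWithinAt {f' : ℝ} (hf : ConcaveOn ℝ s f)
    (ha : a ∈ s) (hx : x ∈ s) (hf' : HasLineDerivWithinAt ℝ f f' s a (x - a)) :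
    f x ≤ f a + f' := by
  have h_slope := (concaveOn_comp_add_smul hf a (x - a)).slope_le_of_hasDerivWithinAt
    (x := 0) (y := 1) (by simpa using ha) (by simpa using hx) one_pos hf'
  have h_diff : f x - f a ≤ f' := by simpa [slope_def_field] using h_slope
  linarith

theorem stmt17_general {c : ℝ} (hf : ConcaveOn ℝ s f) (ha : a ∈ s) (hx : x ∈ s) (hfa : 0 ≤ f a)
    (hf' : HasLineDerivWithinAt ℝ f (c * f a) s a (x - a)) :
    f x ≤ f a * Real.exp c :=
  calc
    f x ≤ f a + c * f a := le_add_of_concaveOn_of_hasLineDerivWithinAt hf ha hx hf'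
    _ = f a * (c + 1) := by ring
    _ ≤ f a * Real.exp c := mul_le_mul_of_nonneg_left (Real.add_one_le_exp c) hfa

end Concave

/-- Let `I ⊆ ℝ` be an interval, `η` concave on `I` and differentiable at `b* ∈ I` with
`η(b*) ≥ 0` and `γ₊·η(b*) = η'(b*)`. Then `η(x) ≤ η(b*)·e^{γ₊(x−b*)}` for every `x ∈ I`
(the verification inequality `η − Ṽ_{b*}' ≤ 0` below the barrier). -/
theorem stmt17 (μ σ r : ℝ) (hσ : 0 < σ) (hr : 0 < r)
    (γp : ℝ)
    (hγp : γp = (-μ + Real.sqrt (μ ^ 2 + 2 * r * σ ^ 2)) / σ ^ 2)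
    (I : Set ℝ) (hI : Convex ℝ I)
    (η : ℝ → ℝ) (hconc : ConcaveOn ℝ I η)
    (bstar : ℝ) (hb : bstar ∈ I)
    (hd : DifferentiableAt ℝ η bstar)
    (hpos : 0 ≤ η bstar)
    (hfit : γp * η bstar = deriv η bstar) :
    ∀ x ∈ I, η x ≤ η bstar * Real.exp (γp * (x - bstar)) := by
  intro x hx
  refine stmt17_general hconc hb hx hpos ?_
  simpa [← hfit, mul_comm, mul_left_comm, mul_assoc] using
    (hd.hasDerivAt.hasFDerivAt.hasLineDerivAt (x - bstar)).hasLineDerivWithinAt I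
end
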